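/- arXiv:1502.06841 — 4 statements merged into one kernel-verified Lean document; each statement's English description precedes it below -/
import Mathlib

section
/- (Liapunov's linearized stability theorem.) Let f : ℝ^N → ℝ^N be continuously differentiable and let a ∈ ℝ^N satisfy f(a) = 0. Assume that every complex root of the characteristic polynomial of the Jacobian matrix Df(a) has negative real part, and let η be the minimum of the negated real parts of these roots. Then for each δ with 0 < δ < η there exist ρ > 0 and M ≥ 1 such that: for every C¹ function u : [0,τ) → ℝ^N satisfying u′(t) = f(u(t)) for all t ∈ [0,τ) and ‖u(0) − a‖ ≤ ρ, one has ‖u(t) − a‖ ≤ M·‖u(0) − a‖·e^{−δt} for all t ∈ [0,τ). -/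
open Set Polynomial

open Filter Topology

/-- Gelfand's formula as a geometric bound on powers. -/
lemma exists_norm_pow_le_of_spectrum_lt {A : Type*} [NormedRing A] [NormedAlgebra ℂ A]
    [CompleteSpace A] (a : A) {r : ℝ} (hr : 0 < r) (h : ∀ z ∈ spectrum ℂ a, ‖z‖ < r) :
    ∃ C : ℝ, ∀ n : ℕ, ‖a ^ n‖ ≤ C * r ^ n := by
  rcases subsingleton_or_nontrivial A with hA | hA
  · exact ⟨0, fun n => by simp [Subsingleton.elim (a ^ n) 0]⟩
  lift r to NNReal using hr.le
  have h1 : spectralRadius ℂ a < r :=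
    spectrum.spectralRadius_lt_of_forall_lt a fun z hz => by exact_mod_cast h z hz
  have h2 := (spectrum.pow_nnnorm_pow_one_div_tendsto_nhds_spectralRadius a).eventually_lt_const h1
  obtain ⟨m, hm⟩ := (h2.and (eventually_ge_atTop 1)).exists_forall_of_atTop
  have key : ∀ n ≥ m, ‖a ^ n‖ ≤ (r : ℝ) ^ n := by
    intro n hn
    obtain ⟨h3, h4⟩ := hm n hn
    have hn0 : (0 : ℝ) < n := by exact_mod_cast h4
    rw [one_div, ENNReal.rpow_inv_lt_iff hn0, ENNReal.rpow_natCast] at h3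
    exact_mod_cast h3.le
  refine ⟨1 + ∑ k ∈ Finset.range m, ‖a ^ k‖ / (r : ℝ) ^ k, fun n => ?_⟩
  have hpos : 0 ≤ ∑ k ∈ Finset.range m, ‖a ^ k‖ / (r : ℝ) ^ k :=
    Finset.sum_nonneg fun k _ => by positivity
  have hrn : 0 < (r : ℝ) ^ n := pow_pos hr n
  rcases le_or_gt m n with hn | hn
  · nlinarith [key n hn]
  · rw [← div_le_iff₀ hrn]
    have := Finset.single_le_sum (f := fun k => ‖a ^ k‖ / (r : ℝ) ^ k)
      (fun k _ => by positivity) (Finset.mem_range.2 hn)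
    linarith

/-- If the spectrum of `a` lies in `{Re z < -δ}`, an Euler step `1 + h a` contracts, up to
equivalence of norms, at a rate `δ' > δ`. -/
lemma exists_norm_one_add_smul_pow_le {A : Type*} [NormedRing A] [NormedAlgebra ℂ A]
    [CompleteSpace A] (a : A) {δ : ℝ} (h : ∀ z ∈ spectrum ℂ a, z.re < -δ) :
    ∃ η > 0, ∃ δ' > δ, η * δ' < 1 ∧
      ∃ C : ℝ, ∀ n : ℕ, ‖(1 + (η : ℂ) • a) ^ n‖ ≤ C * (1 - η * δ') ^ n := by
  have hS : IsCompact (spectrum ℂ a) := spectrum.isCompact a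
  obtain ⟨δ', hδ', h'⟩ : ∃ δ' > δ, ∀ z ∈ spectrum ℂ a, z.re < -δ' := by
    rcases (spectrum ℂ a).eq_empty_or_nonempty with he | hne
    · exact ⟨δ + 1, by linarith, by simp [he]⟩
    · obtain ⟨w, hw, hmax⟩ := hS.exists_isMaxOn hne Complex.continuous_re.continuousOn
      refine ⟨(δ - w.re) / 2, by linarith [h w hw], fun z hz => ?_⟩
      have : z.re ≤ w.re := hmax hz
      linarith [h w hw]
  obtain ⟨γ, hγ, h''⟩ : ∃ γ > δ, γ < δ' := ⟨(δ + δ') / 2, by linarith, by linarith⟩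
  obtain ⟨K, hK⟩ := hS.isBounded.exists_norm_le
  have e1 : ∀ᶠ η : ℝ in 𝓝[>] 0, η * γ < 1 := by
    refine nhdsWithin_le_nhds ?_
    exact (by fun_prop : Continuous fun η : ℝ => η * γ).tendsto' 0 0 (by simp)
      |>.eventually_lt_const one_pos
  have e2 : ∀ᶠ η : ℝ in 𝓝[>] 0, η * K ^ 2 < 2 * (δ' - γ) := by
    refine nhdsWithin_le_nhds ?_
    exact (by fun_prop : Continuous fun η : ℝ => η * K ^ 2).tendsto' 0 0 (by simp)
      |>.eventually_lt_const (by linarith)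
  obtain ⟨η, ⟨h1, h2⟩, h3⟩ := ((e1.and e2).and self_mem_nhdsWithin).exists
  have hη : 0 < η := h3
  refine ⟨η, hη, γ, hγ, h1, exists_norm_pow_le_of_spectrum_lt _ (by linarith) fun z hz => ?_⟩
  obtain ⟨w, hw, rfl⟩ : ∃ w ∈ spectrum ℂ a, 1 + (η : ℂ) * w = z := by
    have hp : 0 < degree (C (η : ℂ) * X + C 1 : ℂ[X]) := by
      rw [degree_linear (by exact_mod_cast hη.ne')]; exact one_pos
    have := spectrum.map_polynomial_aeval_of_degree_pos a _ hp
    have e : aeval a (C (η : ℂ) * X + C 1 : ℂ[X]) = 1 + (η : ℂ) • a := by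
      simp [Algebra.smul_def, add_comm]
    rw [e] at this
    rw [this] at hz
    obtain ⟨w, hw, rfl⟩ := hz
    exact ⟨w, hw, by simp [add_comm]⟩
  refine lt_of_pow_lt_pow_left₀ 2 (by linarith) ?_
  have hw1 := h' w hw
  have hw2 : w.re ^ 2 + w.im ^ 2 ≤ K ^ 2 := by
    have := pow_le_pow_left₀ (norm_nonneg w) (hK w hw) 2
    rwa [← Complex.normSq_eq_norm_sq, Complex.normSq_apply, ← sq, ← sq] at this
  rw [← Complex.normSq_eq_norm_sq, Complex.normSq_apply]
  simp only [Complex.add_re, Complex.add_im, Complex.mul_re, Complex.mul_im, Complex.one_re,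
    Complex.one_im, Complex.ofReal_re, Complex.ofReal_im]
  have : η * (2 * w.re + η * (w.re ^ 2 + w.im ^ 2)) < η * (-2 * γ) := by
    refine mul_lt_mul_of_pos_left ?_ hη
    nlinarith
  nlinarith [sq_nonneg (η * γ)]

/-- An equivalent seminorm for which an operator with geometrically bounded powers contracts. -/
lemma exists_seminorm_contracting {E : Type*} [NormedAddCommGroup E] [NormedSpace ℝ E]
    (T : E →L[ℝ] E) {r C : ℝ} (hr : 0 < r) (hT : ∀ n : ℕ, ‖T ^ n‖ ≤ C * r ^ n) :
    ∃ q : Seminorm ℝ E, (∀ x, ‖x‖ ≤ q x) ∧ (∀ x, q x ≤ C * ‖x‖) ∧ ∀ x, q (T x) ≤ r * q x := by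
  have hle (x : E) (n : ℕ) : ‖(T ^ n) x‖ / r ^ n ≤ C * ‖x‖ := by
    rw [div_le_iff₀ (pow_pos hr n)]
    calc ‖(T ^ n) x‖ ≤ ‖T ^ n‖ * ‖x‖ := (T ^ n).le_opNorm x
      _ ≤ (C * r ^ n) * ‖x‖ := by gcongr; exact hT n
      _ = _ := by ring
  have hb (x : E) : BddAbove (range fun n : ℕ => ‖(T ^ n) x‖ / r ^ n) :=
    ⟨C * ‖x‖, by rintro _ ⟨n, rfl⟩; exact hle x n⟩
  refine ⟨Seminorm.of (fun x => ⨆ n : ℕ, ‖(T ^ n) x‖ / r ^ n) (fun x y => ?_) (fun c x => ?_),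
    fun x => ?_, fun x => ciSup_le (hle x), fun x => ?_⟩
  · refine ciSup_le fun n => ?_
    calc ‖(T ^ n) (x + y)‖ / r ^ n ≤ (‖(T ^ n) x‖ + ‖(T ^ n) y‖) / r ^ n := by
          gcongr; rw [map_add]; exact norm_add_le _ _
      _ = ‖(T ^ n) x‖ / r ^ n + ‖(T ^ n) y‖ / r ^ n := add_div _ _ _
      _ ≤ _ := add_le_add (le_ciSup (hb x) n) (le_ciSup (hb y) n)
  · simp only [map_smul, norm_smul, mul_div_assoc]
    exact (Real.mul_iSup_of_nonneg (norm_nonneg c) _).symm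
  · change ‖x‖ ≤ ⨆ n : ℕ, ‖(T ^ n) x‖ / r ^ n
    simpa using le_ciSup (hb x) 0
  · refine ciSup_le fun n => ?_
    have := le_ciSup (hb x) (n + 1)
    simp only [pow_succ, mul_apply_eq_comp] at this
    change _ ≤ r * ⨆ n : ℕ, ‖(T ^ n) x‖ / r ^ n
    calc ‖(T ^ n) (T x)‖ / r ^ n = r * (‖(T ^ n) (T x)‖ / (r ^ n * r)) := by
          field_simp
      _ ≤ _ := by gcongr

/-- Upper bound for the right lower Dini derivative of an adapted seminorm along a curve. -/
lemma frequently_slope_seminorm_lt {E : Type*} [NormedAddCommGroup E] [NormedSpace ℝ E]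
    (A : E →L[ℝ] E) {η γ K : ℝ} (hη : 0 < η) (q : Seminorm ℝ E)
    (hqK : ∀ x, q x ≤ K * ‖x‖) (hq : ∀ x, q ((1 + η • A) x) ≤ (1 - η * γ) * q x)
    {v : ℝ → E} {w : E} {x r : ℝ} (hv : HasDerivWithinAt v (A (v x) + w) (Ici x) x)
    (hr : -γ * q (v x) + K * ‖w‖ < r) :
    ∃ᶠ z in 𝓝[>] x, slope (fun t => q (v t)) x z < r := by
  refine Eventually.frequently ?_
  have h1 : Tendsto (fun z => -γ * q (v x) + K * ‖w‖ + K * ‖slope v x z - (A (v x) + w)‖)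
      (𝓝[>] x) (𝓝 (-γ * q (v x) + K * ‖w‖)) := by
    have := hasDerivWithinAt_iff_tendsto_slope.1 hv
    rw [Ici_sdiff_left] at this
    have h2 := ((this.sub_const (A (v x) + w)).norm.const_mul K).const_add
      (-γ * q (v x) + K * ‖w‖)
    simpa using h2
  have h3 : ∀ᶠ z in 𝓝[>] x, z < x + η :=
    nhdsWithin_le_nhds (eventually_lt_nhds (by linarith))
  filter_upwards [h1.eventually_lt_const hr, h3, self_mem_nhdsWithin] with z hz1 hz2 hz3
  refine lt_of_le_of_lt ?_ hz1
  have hs : 0 < z - x := sub_pos.2 hz3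
  set e := slope v x z - (A (v x) + w) with he
  have hvz : v z = (1 - (z - x) / η) • v x + ((z - x) / η) • ((1 + η • A) (v x))
      + (z - x) • w + (z - x) • e := by
    have : v z = v x + (z - x) • slope v x z := by simp [sub_smul_slope]
    rw [this, show slope v x z = A (v x) + w + e by rw [he]; abel]
    simp only [add_apply, one_apply_eq_self, smul_apply]
    match_scalars <;> field_simp
    ring
  have hb : q (v z) ≤ (1 - (z - x) / η) * q (v x) + (z - x) / η * ((1 - η * γ) * q (v x))
      + (z - x) * (K * ‖w‖) + (z - x) * (K * ‖e‖) := by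
    have hc1 : 0 ≤ 1 - (z - x) / η := by
      rw [sub_nonneg, div_le_one hη]; linarith
    have hc2 : 0 ≤ (z - x) / η := by positivity
    rw [hvz]
    refine (map_add_le_add q _ _).trans (add_le_add ((map_add_le_add q _ _).trans
      (add_le_add ((map_add_le_add q _ _).trans (add_le_add ?_ ?_)) ?_)) ?_)
    · rw [map_smul_eq_mul, Real.norm_of_nonneg hc1]
    · rw [map_smul_eq_mul, Real.norm_of_nonneg hc2]; gcongr; exact hq _
    · rw [map_smul_eq_mul, Real.norm_of_nonneg hs.le]; gcongr; exact hqK _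
    · rw [map_smul_eq_mul, Real.norm_of_nonneg hs.le]; gcongr; exact hqK _
  rw [slope_def_field, div_le_iff₀ hs]
  have e1 : (1 - (z - x) / η) * q (v x) + (z - x) / η * ((1 - η * γ) * q (v x))
      = q (v x) - (z - x) * γ * q (v x) := by field_simp; ring
  rw [e1] at hb
  linarith

/-- Linearized stability when an Euler step of the linearization is power-contracting. -/
lemma exists_exp_decay_of_norm_one_add_smul_pow_le {E : Type*} [NormedAddCommGroup E]
    [NormedSpace ℝ E] {f : E → E} {a : E} {A : E →L[ℝ] E} (hf : HasFDerivAt f A a) (ha : f a = 0)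
    {δ η γ C : ℝ} (hδ : 0 ≤ δ) (hη : 0 < η) (hγ : δ < γ) (hηγ : η * γ < 1)
    (hpow : ∀ n : ℕ, ‖(1 + η • A) ^ n‖ ≤ C * (1 - η * γ) ^ n) :
    ∃ ρ > 0, ∃ M ≥ (1 : ℝ), ∀ (τ : ℝ) (u : ℝ → E),
      (∀ t ∈ Ico (0 : ℝ) τ, HasDerivWithinAt u (f (u t)) (Ico 0 τ) t) →
      ‖u 0 - a‖ ≤ ρ →
      ∀ t ∈ Ico (0 : ℝ) τ, ‖u t - a‖ ≤ M * ‖u 0 - a‖ * Real.exp (-δ * t) := by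
  obtain ⟨q, hq1, hq2, hq3⟩ := exists_seminorm_contracting (1 + η • A) (by linarith) hpow
  set K := max C 1
  have hK : 1 ≤ K := le_max_right _ _
  have hK0 : 0 < K := by linarith
  have hqK (x : E) : q x ≤ K * ‖x‖ := (hq2 x).trans (by gcongr; exact le_max_left _ _)
  have hqc : Continuous q := by
    refine Seminorm.continuous_of_continuousAt_zero ?_
    have h0 : Tendsto (fun x : E => K * ‖x‖) (𝓝 0) (𝓝 0) :=
      (by fun_prop : Continuous fun x : E => K * ‖x‖).tendsto' _ _ (by simp)
    simpa [ContinuousAt] using squeeze_zero (fun x => apply_nonneg q x) hqK h0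
  obtain ⟨ε, hε, hKε⟩ : ∃ ε > 0, K * ε < γ - δ :=
    ⟨(γ - δ) / (2 * K), by have : 0 < γ - δ := by linarith
                           positivity, by field_simp; linarith⟩
  obtain ⟨R, hR, hg⟩ : ∃ R > 0, ∀ y, ‖y - a‖ ≤ R → ‖f y - A (y - a)‖ ≤ ε * ‖y - a‖ := by
    have := hf.isLittleO.bound hε
    obtain ⟨R, hR, h⟩ := Metric.eventually_nhds_iff.1 this
    refine ⟨R / 2, by positivity, fun y hy => ?_⟩
    have := h (y := y) (by rw [dist_eq_norm]; linarith)
    simpa [ha] using this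
  refine ⟨R / (2 * K), by positivity, K, hK, fun τ u hu hu0 t ht => ?_⟩
  have hv (x : ℝ) (hx : x ∈ Ico 0 t) :
      HasDerivWithinAt (fun s => u s - a) (A (u x - a) + (f (u x) - A (u x - a))) (Ici x) x := by
    rw [add_sub_cancel]
    refine HasDerivWithinAt.sub_const a ?_
    refine ((hu x ⟨hx.1, hx.2.trans ht.2⟩).mono_of_mem_nhdsWithin ?_)
    exact mem_of_superset (Ico_mem_nhdsGE (hx.2.trans ht.2)) (Ico_subset_Ico_left hx.1)
  have hcont : ContinuousOn (fun s => q (u s - a)) (Icc 0 t) := by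
    refine hqc.comp_continuousOn (ContinuousOn.sub (fun x hx => ?_) continuousOn_const)
    exact ((hu x ⟨hx.1, hx.2.trans_lt ht.2⟩).continuousWithinAt).mono
      (Icc_subset_Ico_right ht.2)
  have hq0 : q (u 0 - a) < R := by
    have h1 := hqK (u 0 - a)
    have h2 : K * ‖u 0 - a‖ ≤ K * (R / (2 * K)) := by gcongr
    have h3 : K * (R / (2 * K)) = R / 2 := by field_simp
    linarith
  have main (c : ℝ) (hc : q (u 0 - a) < c) (hcR : c ≤ R) :
      q (u t - a) ≤ c * Real.exp (-δ * t) := by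
    have hc0 : 0 < c := (apply_nonneg q _).trans_lt hc
    have hB (x : ℝ) : HasDerivAt (fun s => c * Real.exp (-δ * s))
        (c * (Real.exp (-δ * x) * (-δ))) x := by
      simpa using (((hasDerivAt_id x).const_mul (-δ)).exp).const_mul c
    refine image_le_of_liminf_slope_right_lt_deriv_boundary
      (f' := fun x => -γ * q (u x - a) + K * ‖f (u x) - A (u x - a)‖) hcont
      (fun x hx r hr => frequently_slope_seminorm_lt A hη q hqK hq3 (hv x hx) hr)
      (by simpa using hc.le) hB (fun x hx hxB => ?_) (right_mem_Icc.2 ht.1)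
    have hpos : 0 < q (u x - a) := by rw [hxB]; positivity
    have hle : q (u x - a) ≤ R := by
      rw [hxB]
      have : Real.exp (-δ * x) ≤ 1 := Real.exp_le_one_iff.2 (by nlinarith [hx.1])
      nlinarith
    have h1 := hg (u x) ((hq1 _).trans hle)
    have h2 : K * ‖f (u x) - A (u x - a)‖ ≤ K * (ε * q (u x - a)) := by
      gcongr; exact h1.trans (by gcongr; exact hq1 _)
    have h3 : c * (Real.exp (-δ * x) * (-δ)) = -δ * q (u x - a) := by rw [hxB]; ring
    rw [h3]
    nlinarith
  have hfin : q (u t - a) / Real.exp (-δ * t) ≤ q (u 0 - a) := by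
    refine le_of_forall_gt_imp_ge_of_dense fun c hc => ?_
    rw [div_le_iff₀ (Real.exp_pos _)]
    rcases le_total c R with h | h
    · exact main c hc h
    · exact (main R hq0 le_rfl).trans (by gcongr)
  rw [div_le_iff₀ (Real.exp_pos _)] at hfin
  calc ‖u t - a‖ ≤ q (u t - a) := hq1 _
    _ ≤ q (u 0 - a) * Real.exp (-δ * t) := hfin
    _ ≤ _ := by gcongr; exact hqK _

open scoped Matrix Matrix.Norms.L2Operator in
lemma Matrix.norm_toEuclideanCLM_le_norm_map_ofReal {n : Type*} [Fintype n] [DecidableEq n]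
    (B : Matrix n n ℝ) :
    ‖Matrix.toEuclideanCLM (𝕜 := ℝ) B‖ ≤ ‖B.map Complex.ofReal‖ := by
  have hn (y : n → ℝ) : ‖WithLp.toLp 2 y‖ = ‖WithLp.toLp 2 fun i => (y i : ℂ)‖ := by
    simp [EuclideanSpace.norm_eq]
  refine ContinuousLinearMap.opNorm_le_bound _ (norm_nonneg _) fun x => ?_
  obtain ⟨x, rfl⟩ := (WithLp.toLp_surjective 2) x
  rw [Matrix.toEuclideanCLM_toLp, hn, hn]
  have := (Matrix.toEuclideanCLM (𝕜 := ℂ) (B.map Complex.ofReal)).le_opNorm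
    (WithLp.toLp 2 fun i => (x i : ℂ))
  rw [Matrix.toEuclideanCLM_toLp, Matrix.l2_opNorm_toEuclideanCLM] at this
  have e : (fun i => (((B *ᵥ x) i : ℝ) : ℂ)) = B.map Complex.ofReal *ᵥ fun i => (x i : ℂ) := by
    ext i
    simp [Matrix.mulVec, dotProduct]
  rwa [e]

open scoped Matrix.Norms.L2Operator in
lemma exists_norm_one_add_smul_pow_le_of_charpoly {n : Type*} [Fintype n] [DecidableEq n]
    (A : EuclideanSpace ℝ n →L[ℝ] EuclideanSpace ℝ n) {δ : ℝ}
    (h : ∀ μ : ℂ, ((A : EuclideanSpace ℝ n →ₗ[ℝ] EuclideanSpace ℝ n).charpoly.map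
      (algebraMap ℝ ℂ)).IsRoot μ → δ < -μ.re) :
    ∃ η > 0, ∃ δ' > δ, η * δ' < 1 ∧
      ∃ C : ℝ, ∀ k : ℕ, ‖(1 + η • A) ^ k‖ ≤ C * (1 - η * δ') ^ k := by
  obtain ⟨B, rfl⟩ : ∃ B, Matrix.toEuclideanCLM (𝕜 := ℝ) B = A :=
    (Matrix.toEuclideanCLM (𝕜 := ℝ) (n := n)).surjective A
  have hB : (Matrix.toEuclideanCLM (𝕜 := ℝ) B : EuclideanSpace ℝ n →ₗ[ℝ] _).charpoly
      = B.charpoly := Matrix.charpoly_toLin B (PiLp.basisFun 2 ℝ n)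
  rw [hB, ← Matrix.charpoly_map] at h
  obtain ⟨η, hη, δ', hδ', h1, C, hC⟩ := exists_norm_one_add_smul_pow_le
    (B.map Complex.ofReal) (δ := δ) fun z hz => by
      linarith [h z (Matrix.mem_spectrum_iff_isRoot_charpoly.1 hz)]
  refine ⟨η, hη, δ', hδ', h1, C, fun k => ?_⟩
  have e1 : (1 + η • Matrix.toEuclideanCLM (𝕜 := ℝ) B) ^ k
      = Matrix.toEuclideanCLM (𝕜 := ℝ) ((1 + η • B) ^ k) := by simp
  have e2 : ((1 + η • B) ^ k).map Complex.ofReal = (1 + (η : ℂ) • B.map Complex.ofReal) ^ k := by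
    have : (1 + (η : ℂ) • B.map Complex.ofReal) = Complex.ofRealHom.mapMatrix (1 + η • B) := by
      ext i j
      by_cases hij : i = j <;> simp [hij]
    rw [this, ← map_pow]
    rfl
  rw [e1]
  exact (Matrix.norm_toEuclideanCLM_le_norm_map_ofReal _).trans (e2 ▸ hC k)

/-- Theorem 5.2.1 (Liapunov's linearized stability theorem): if all complex roots of the
characteristic polynomial of `Df(a)` have negative real part and `0 < δ` is below the
minimum of their negated real parts, then solutions starting close to `a` decay to `a`
exponentially at rate `δ`. -/
theorem stmt_7 {N : ℕ} (f : EuclideanSpace ℝ (Fin N) → EuclideanSpace ℝ (Fin N))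
    (hf : ContDiff ℝ 1 f) (a : EuclideanSpace ℝ (Fin N)) (ha : f a = 0)
    (hneg : ∀ μ : ℂ,
      (((fderiv ℝ f a : EuclideanSpace ℝ (Fin N) →ₗ[ℝ] EuclideanSpace ℝ (Fin N)).charpoly.map
        (algebraMap ℝ ℂ)).IsRoot μ) → μ.re < 0)
    (δ : ℝ) (hδpos : 0 < δ)
    (hδ : ∀ μ : ℂ,
      (((fderiv ℝ f a : EuclideanSpace ℝ (Fin N) →ₗ[ℝ] EuclideanSpace ℝ (Fin N)).charpoly.map
        (algebraMap ℝ ℂ)).IsRoot μ) → δ < -μ.re) :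
    ∃ ρ > 0, ∃ M ≥ (1:ℝ), ∀ (τ : ℝ) (u : ℝ → EuclideanSpace ℝ (Fin N)),
      (∀ t ∈ Set.Ico (0:ℝ) τ, HasDerivWithinAt u (f (u t)) (Set.Ico 0 τ) t) →
      ‖u 0 - a‖ ≤ ρ →
      ∀ t ∈ Set.Ico (0:ℝ) τ, ‖u t - a‖ ≤ M * ‖u 0 - a‖ * Real.exp (-δ * t) := by
  obtain ⟨η, hη, γ, hγ, h1, C, hC⟩ := exists_norm_one_add_smul_pow_le_of_charpoly (fderiv ℝ f a) hδ
  exact exists_exp_decay_of_norm_one_add_smul_pow_le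
    (hf.differentiable one_ne_zero a).hasFDerivAt ha hδpos.le hη hγ h1 hC
end

section
/- (Bellman's instability theorem.) Let f : ℝ^N → ℝ^N be continuously differentiable and let a ∈ ℝ^N satisfy f(a) = 0. Assume that at least one complex root of the characteristic polynomial of the Jacobian matrix Df(a) has positive real part. Then a is an unstable equilibrium of u′ = f(u): there exists ε > 0 such that for every δ > 0 there exist T ≥ 0 and a C¹ function u : [0,T] → ℝ^N with u′(t) = f(u(t)) for all t ∈ [0,T], ‖u(0) − a‖ ≤ δ, and ‖u(T) − a‖ > ε. -/
open Set Polynomial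

section Instability

variable {E : Type*} [NormedAddCommGroup E] [InnerProductSpace ℝ E] [FiniteDimensional ℝ E]

/-- A complex root `μ` of the characteristic polynomial of a real endomorphism yields real vectors
`x`, `y`, the real and imaginary parts of a complex eigenvector. -/
theorem exists_re_im_of_isRoot_charpoly (A : E →ₗ[ℝ] E) {μ : ℂ}
    (hμ : (A.charpoly.map (algebraMap ℝ ℂ)).IsRoot μ) :
    ∃ x y : E, (x ≠ 0 ∨ y ≠ 0) ∧ A x = μ.re • x - μ.im • y ∧ A y = μ.im • x + μ.re • y := by
  set b := Module.finBasis ℝ E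
  set M := LinearMap.toMatrix b b A with hM
  have hdet : (Matrix.scalar _ μ - M.map (algebraMap ℝ ℂ)).det = 0 := by
    rw [← Matrix.eval_charpoly, Matrix.charpoly_map, hM, LinearMap.charpoly_toMatrix]
    exact hμ
  obtain ⟨v, hv, hv0⟩ := Matrix.exists_mulVec_eq_zero_iff.mpr hdet
  have hMv : ∀ i, ∑ j, (M i j : ℂ) * v j = μ * v i := by
    intro i
    have h := congrFun hv0 i
    rw [Matrix.sub_mulVec] at h
    simp only [Pi.sub_apply, Pi.zero_apply, sub_eq_zero, Matrix.scalar_apply,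
      Matrix.mulVec_diagonal] at h
    rw [h]
    rfl
  have key : ∀ w : Fin (Module.finrank ℝ E) → ℝ,
      A (∑ j, w j • b j) = ∑ i, (∑ j, M i j * w j) • b i := by
    intro w
    have h1 : ∀ j, A (b j) = ∑ i, M i j • b i := fun j => by
      rw [hM]
      simp only [LinearMap.toMatrix_apply]
      exact (b.sum_repr (A (b j))).symm
    simp only [map_sum, map_smul, h1, Finset.smul_sum, Finset.sum_smul, smul_smul]
    rw [Finset.sum_comm]
    simp only [mul_comm]
  refine ⟨∑ j, (v j).re • b j, ∑ j, (v j).im • b j, ?_, ?_, ?_⟩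
  · by_contra! hxy
    apply hv
    have hre := Fintype.linearIndependent_iff.mp b.linearIndependent _ hxy.1
    have him := Fintype.linearIndependent_iff.mp b.linearIndependent _ hxy.2
    funext i
    exact Complex.ext (hre i) (him i)
  · rw [key, Finset.smul_sum, Finset.smul_sum, ← Finset.sum_sub_distrib]
    refine Finset.sum_congr rfl fun i _ => ?_
    have h := congrArg Complex.re (hMv i)
    simp only [Complex.re_sum, Complex.mul_re, Complex.ofReal_re, Complex.ofReal_im,
      zero_mul, sub_zero] at h
    rw [h, smul_smul, smul_smul, sub_smul]
  · rw [key, Finset.smul_sum, Finset.smul_sum, ← Finset.sum_add_distrib]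
    refine Finset.sum_congr rfl fun i _ => ?_
    have h := congrArg Complex.im (hMv i)
    simp only [Complex.im_sum, Complex.mul_im, Complex.ofReal_re, Complex.ofReal_im,
      zero_mul, add_zero] at h
    rw [h, smul_smul, smul_smul, ← add_smul, add_comm]

/-- A shifted Lyapunov equation: if `A` has an eigenvalue with positive real part, there is a
quadratic form `x ↦ ⟪B x, x⟫`, positive somewhere, whose derivative along `u' = A u` equals
`r ⟪B u, u⟫ + ‖u‖²` for some `r > 0`. -/
theorem exists_lyapunov_form (A : E →L[ℝ] E) {μ : ℂ}
    (hμ : ((A : E →ₗ[ℝ] E).charpoly.map (algebraMap ℝ ℂ)).IsRoot μ) (hre : 0 < μ.re) :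
    ∃ (B : E →L[ℝ] E) (r : ℝ), 0 < r ∧
      (∀ x, inner ℝ (B (A x)) x + inner ℝ (B x) (A x) = r * inner ℝ (B x) x + ‖x‖ ^ 2) ∧
      ∃ x, 0 < inner ℝ (B x) x := by
  let L : Module.End ℝ (E →L[ℝ] E) :=
    LinearMap.mulLeft ℝ (ContinuousLinearMap.adjoint A) + LinearMap.mulRight ℝ A
  have hfin : (spectrum ℝ L).Finite := Module.End.finite_spectrum L
  obtain ⟨r, ⟨hr0, hr⟩, hrL⟩ :=
    (Set.Ioo_infinite (show (0 : ℝ) < 2 * μ.re by linarith)).exists_notMem_finite hfin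
  rw [spectrum.notMem_iff, ← IsUnit.neg_iff, Module.End.isUnit_iff] at hrL
  obtain ⟨B, hB⟩ := hrL.surjective 1
  have hV : ∀ x, inner ℝ (B (A x)) x + inner ℝ (B x) (A x)
      = r * inner ℝ (B x) x + ‖x‖ ^ 2 := by
    intro x
    have h := congrArg (fun C : E →L[ℝ] E => inner ℝ (C x) x) hB
    simp [L, inner_add_left, inner_sub_left, inner_smul_left,
      ContinuousLinearMap.adjoint_inner_left, Module.algebraMap_end_apply] at h
    linarith
  refine ⟨B, r, hr0, hV, ?_⟩
  obtain ⟨x, y, hxy, hx, hy⟩ := exists_re_im_of_isRoot_charpoly (A : E →ₗ[ℝ] E) hμ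
  rw [ContinuousLinearMap.coe_coe] at hx hy
  have h1 := hV x
  have h2 := hV y
  rw [hx] at h1
  rw [hy] at h2
  simp only [map_sub, map_add, map_smul, inner_add_left, inner_add_right, inner_sub_left,
    inner_sub_right, real_inner_smul_left, real_inner_smul_right] at h1 h2
  have hsum : (2 * μ.re - r) * (inner ℝ (B x) x + inner ℝ (B y) y) = ‖x‖ ^ 2 + ‖y‖ ^ 2 := by
    linarith
  have hpos : 0 < ‖x‖ ^ 2 + ‖y‖ ^ 2 := by
    rcases hxy with h | h
    · have := norm_pos_iff.mpr h
      positivity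
    · have := norm_pos_iff.mpr h
      positivity
  by_contra! hneg
  have := hneg x
  have := hneg y
  nlinarith

end Instability

section Gluing

variable {E : Type*} [NormedAddCommGroup E] [NormedSpace ℝ E]

/-- Concatenation of two integral curves of an autonomous vector field. -/
theorem exists_concat_hasDerivWithinAt {f : E → E} {u v : ℝ → E} {p q r : ℝ}
    (hpq : p ≤ q) (hqr : q ≤ r) (huv : v q = u q)
    (hu : ∀ t ∈ Icc p q, HasDerivWithinAt u (f (u t)) (Icc p q) t)
    (hv : ∀ t ∈ Icc q r, HasDerivWithinAt v (f (v t)) (Icc q r) t) :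
    ∃ w : ℝ → E, w p = u p ∧ ∀ t ∈ Icc p r, HasDerivWithinAt w (f (w t)) (Icc p r) t := by
  let w : ℝ → E := fun t => if t ≤ q then u t else v t
  have hwu : ∀ t ∈ Icc p q, w t = u t := fun t ht => if_pos ht.2
  have hwv : ∀ t ∈ Icc q r, w t = v t := by
    intro t ht
    rcases ht.1.eq_or_lt with rfl | h
    · simp [w, huv]
    · exact if_neg h.not_ge
  refine ⟨w, hwu p ⟨le_rfl, hpq⟩, fun t _ => ?_⟩
  rw [← Icc_union_Icc_eq_Icc hpq hqr]
  refine HasDerivWithinAt.union ?_ ?_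
  · by_cases h : t ∈ Icc p q
    · rw [hwu t h]
      exact (hu t h).congr hwu (hwu t h)
    · exact HasFDerivWithinAt.of_notMem_closure (by rwa [isClosed_Icc.closure_eq])
  · by_cases h : t ∈ Icc q r
    · rw [hwv t h]
      exact (hv t h).congr hwv (hwv t h)
    · exact HasFDerivWithinAt.of_notMem_closure (by rwa [isClosed_Icc.closure_eq])

/-- If integral curves through points of a ball exist for a uniform time, and every integral curve
issued from `x₀` stays in that ball, then integral curves from `x₀` exist for all times. -/
theorem exists_integralCurve_Icc_of_forall_mem_closedBall {f : E → E} {a x₀ : E} {ε τ : ℝ}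
    (hτ : 0 < τ)
    (hloc : ∀ t₀ : ℝ, ∀ x ∈ Metric.closedBall a ε, ∃ v : ℝ → E, v t₀ = x ∧
      ∀ t ∈ Icc t₀ (t₀ + τ), HasDerivWithinAt v (f (v t)) (Icc t₀ (t₀ + τ)) t)
    (hstay : ∀ T ≥ (0 : ℝ), ∀ u : ℝ → E, u 0 = x₀ →
      (∀ t ∈ Icc 0 T, HasDerivWithinAt u (f (u t)) (Icc 0 T) t) → u T ∈ Metric.closedBall a ε)
    (n : ℕ) :
    ∃ u : ℝ → E, u 0 = x₀ ∧
      ∀ t ∈ Icc 0 (n * τ), HasDerivWithinAt u (f (u t)) (Icc 0 (n * τ)) t := by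
  induction n with
  | zero =>
    refine ⟨fun t => x₀ + t • f x₀, by simp, fun t ht => ?_⟩
    simp only [Nat.cast_zero, zero_mul, Icc_self, mem_singleton_iff] at ht ⊢
    subst ht
    simpa using (((hasDerivAt_id (0 : ℝ)).smul_const (f x₀)).const_add x₀).hasDerivWithinAt
  | succ n ih =>
    obtain ⟨u, hu0, hu⟩ := ih
    have hn : 0 ≤ (n : ℝ) * τ := by positivity
    obtain ⟨v, hv0, hv⟩ := hloc (n * τ) (u (n * τ)) (hstay _ hn u hu0 hu)
    obtain ⟨w, hw0, hw⟩ := exists_concat_hasDerivWithinAt hn (by linarith) hv0 hu hv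
    have : ((n + 1 : ℕ) : ℝ) * τ = n * τ + τ := by push_cast; ring
    rw [this]
    exact ⟨w, hw0.trans hu0, hw⟩

end Gluing

section Growth

variable {E : Type*} [NormedAddCommGroup E] [InnerProductSpace ℝ E]

/-- A differential inequality for `t ↦ ⟪B (u t - a), u t - a⟫` gives exponential growth. -/
theorem exp_mul_inner_le_of_hasDerivWithinAt {f : E → E} {a : E} (B : E →L[ℝ] E) {r T : ℝ}
    (hT : 0 ≤ T) {u : ℝ → E} (hu : ∀ t ∈ Icc 0 T, HasDerivWithinAt u (f (u t)) (Icc 0 T) t)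
    (hV : ∀ t ∈ Icc 0 T, r * inner ℝ (B (u t - a)) (u t - a) ≤
      inner ℝ (B (f (u t))) (u t - a) + inner ℝ (B (u t - a)) (f (u t))) :
    Real.exp (r * T) * inner ℝ (B (u 0 - a)) (u 0 - a) ≤ inner ℝ (B (u T - a)) (u T - a) := by
  have hderiv : ∀ t ∈ Icc 0 T, HasDerivWithinAt
      (fun t => Real.exp (-(r * t)) * inner ℝ (B (u t - a)) (u t - a))
      (Real.exp (-(r * t)) * (inner ℝ (B (f (u t))) (u t - a) + inner ℝ (B (u t - a)) (f (u t))
        - r * inner ℝ (B (u t - a)) (u t - a))) (Icc 0 T) t := by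
    intro t ht
    have h1 : HasDerivWithinAt (fun t => u t - a) (f (u t)) (Icc 0 T) t := (hu t ht).sub_const a
    have h2 : HasDerivWithinAt (fun t => B (u t - a)) (B (f (u t))) (Icc 0 T) t :=
      B.hasFDerivAt.comp_hasDerivWithinAt t h1
    have h3 := h2.inner ℝ h1
    have h4 : HasDerivWithinAt (fun t => Real.exp (-(r * t)))
        (Real.exp (-(r * t)) * -(r * 1)) (Icc 0 T) t :=
      (((hasDerivAt_id t).const_mul r).neg.exp).hasDerivWithinAt
    refine (h4.mul h3).congr_deriv ?_
    ring
  have hmono := monotoneOn_of_hasDerivWithinAt_nonneg (convex_Icc 0 T)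
    (fun t ht => (hderiv t ht).continuousWithinAt)
    (fun t ht => (hderiv t (interior_subset ht)).mono interior_subset)
    (fun t ht => mul_nonneg (Real.exp_pos _).le
      (sub_nonneg.mpr (hV t (interior_subset ht))))
  have h := hmono (left_mem_Icc.mpr hT) (right_mem_Icc.mpr hT) hT
  simp only [mul_zero, neg_zero, Real.exp_zero, one_mul] at h
  calc _ ≤ Real.exp (r * T) * (Real.exp (-(r * T)) * inner ℝ (B (u T - a)) (u T - a)) := by gcongr
    _ = _ := by rw [← mul_assoc, ← Real.exp_add]; simp

/-- If the derivative of a quadratic form along the linearisation dominates `‖x‖²`, its derivative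
along the nonlinear flow is bounded below near the equilibrium. -/
theorem exists_forall_mem_closedBall_le_inner {f : E → E} {a : E} {A B : E →L[ℝ] E} {r : ℝ}
    (hf : HasFDerivAt f A a) (ha : f a = 0)
    (hV : ∀ x, inner ℝ (B (A x)) x + inner ℝ (B x) (A x) = r * inner ℝ (B x) x + ‖x‖ ^ 2) :
    ∃ ρ > 0, ∀ x ∈ Metric.closedBall a ρ, r * inner ℝ (B (x - a)) (x - a) ≤
      inner ℝ (B (f x)) (x - a) + inner ℝ (B (x - a)) (f x) := by
  have hc : 0 < 1 / (2 * (‖B‖ + 1)) := by positivity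
  obtain ⟨ρ, hρ, hball⟩ := Metric.nhds_basis_closedBall.eventually_iff.mp
    (hf.isLittleO.def hc)
  refine ⟨ρ, hρ, fun x hx => ?_⟩
  have hrem := hball hx
  rw [ha, sub_zero] at hrem
  set y := x - a with hy
  obtain ⟨g, hg⟩ : ∃ g, g = f x - A y := ⟨_, rfl⟩
  have hfx : f x = A y + g := by rw [hg]; abel
  rw [← hg] at hrem
  have h1 : |inner ℝ (B g) y| ≤ ‖B‖ * ‖g‖ * ‖y‖ :=
    (abs_real_inner_le_norm _ _).trans (by gcongr; exact B.le_opNorm g)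
  have h2 : |inner ℝ (B y) g| ≤ ‖B‖ * ‖y‖ * ‖g‖ :=
    (abs_real_inner_le_norm _ _).trans (by gcongr; exact B.le_opNorm y)
  have h3 : 2 * (‖B‖ * ‖g‖ * ‖y‖) ≤ ‖y‖ ^ 2 := by
    have : 2 * (‖B‖ + 1) * ‖g‖ ≤ ‖y‖ := by
      rw [one_div, inv_mul_eq_div, le_div_iff₀ (by positivity)] at hrem
      linarith
    nlinarith [norm_nonneg y, norm_nonneg g, norm_nonneg B]
  rw [hfx, map_add, inner_add_left, inner_add_right]
  have := hV y
  have := neg_abs_le (inner ℝ (B g) y)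
  have := neg_abs_le (inner ℝ (B y) g)
  linarith

end Growth

/-- Theorem 5.4.1 (Bellman's instability theorem): if some complex root of the
characteristic polynomial of `Df(a)` has positive real part, then the equilibrium `a`
of `u' = f(u)` is unstable. -/
theorem stmt_8 {N : ℕ} (f : EuclideanSpace ℝ (Fin N) → EuclideanSpace ℝ (Fin N))
    (hf : ContDiff ℝ 1 f) (a : EuclideanSpace ℝ (Fin N)) (ha : f a = 0)
    (hroot : ∃ μ : ℂ,
      (((fderiv ℝ f a : EuclideanSpace ℝ (Fin N) →ₗ[ℝ] EuclideanSpace ℝ (Fin N)).charpoly.map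
        (algebraMap ℝ ℂ)).IsRoot μ) ∧ 0 < μ.re) :
    ∃ ε > 0, ∀ δ > 0, ∃ T ≥ (0:ℝ), ∃ u : ℝ → EuclideanSpace ℝ (Fin N),
      (∀ t ∈ Set.Icc (0:ℝ) T, HasDerivWithinAt u (f (u t)) (Set.Icc 0 T) t) ∧
      ‖u 0 - a‖ ≤ δ ∧ ε < ‖u T - a‖ := by
  obtain ⟨μ, hμ, hre⟩ := hroot
  obtain ⟨B, r, hr, hV, x, hx⟩ := exists_lyapunov_form (fderiv ℝ f a) hμ hre
  obtain ⟨ρ, hρ, hgrow⟩ := exists_forall_mem_closedBall_le_inner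
    (hf.differentiable one_ne_zero a).hasFDerivAt ha hV
  obtain ⟨τ, hτ, R, ε₀, L, K, hε₀, hpl⟩ := IsPicardLindelof.of_contDiffAt_one hf.contDiffAt (x₀ := a)
  have hε : 0 < min ρ (ε₀ : ℝ) := lt_min hρ (by exact_mod_cast hε₀)
  refine ⟨min ρ ε₀, hε, fun δ hδ => ?_⟩
  by_contra! hcon
  have hxn : 0 < ‖x‖ := by
    rw [norm_pos_iff]
    rintro rfl
    simp at hx
  set s : ℝ := δ / ‖x‖
  have hs : 0 < s := by positivity
  have hstay : ∀ T ≥ (0 : ℝ), ∀ u : ℝ → EuclideanSpace ℝ (Fin N), u 0 = a + s • x →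
      (∀ t ∈ Icc 0 T, HasDerivWithinAt u (f (u t)) (Icc 0 T) t) →
      u T ∈ Metric.closedBall a (min ρ ε₀) := by
    intro T hT u hu0 hu
    rw [mem_closedBall_iff_norm]
    refine hcon T hT u hu ?_
    rw [hu0, add_sub_cancel_left, norm_smul, Real.norm_of_nonneg hs.le, div_mul_cancel₀ _ hxn.ne']
  have hglob := exists_integralCurve_Icc_of_forall_mem_closedBall hτ
    (fun t₀ y hy => by
      obtain ⟨v, hv0, hv⟩ := (hpl t₀).exists_eq_forall_mem_Icc_hasDerivWithinAt
        (Metric.closedBall_subset_closedBall (min_le_right _ _) hy)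
      have hsub : Icc t₀ (t₀ + τ) ⊆ Icc (t₀ - τ) (t₀ + τ) :=
        Icc_subset_Icc_left (by linarith)
      exact ⟨v, hv0, fun t ht => (hv t (hsub ht)).mono hsub⟩) hstay
  have hV0 : 0 < inner ℝ (B (s • x)) (s • x) := by
    rw [map_smul, real_inner_smul_left, real_inner_smul_right]
    positivity
  have hbound : ∀ n : ℕ, Real.exp (r * (n * τ)) * inner ℝ (B (s • x)) (s • x) ≤
      ‖B‖ * min ρ ε₀ * min ρ ε₀ := by
    intro n
    obtain ⟨u, hu0, hu⟩ := hglob n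
    have hnτ : 0 ≤ (n : ℝ) * τ := by positivity
    have hmem : ∀ t ∈ Icc 0 (n * τ), u t ∈ Metric.closedBall a (min ρ (ε₀ : ℝ)) := fun t ht =>
      hstay t ht.1 u hu0 fun t' ht' =>
        (hu t' ⟨ht'.1, ht'.2.trans ht.2⟩).mono (Icc_subset_Icc_right ht.2)
    have h := exp_mul_inner_le_of_hasDerivWithinAt B hnτ hu fun t ht =>
      hgrow (u t) (Metric.closedBall_subset_closedBall (min_le_left _ _) (hmem t ht))
    rw [hu0, add_sub_cancel_left] at h
    have hT := mem_closedBall_iff_norm.mp (hmem _ (right_mem_Icc.mpr hnτ))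
    refine h.trans ((real_inner_le_norm _ _).trans ?_)
    gcongr
    exact (B.le_opNorm _).trans (by gcongr)
  have htend : Filter.Tendsto
      (fun n : ℕ => Real.exp (r * (n * τ)) * inner ℝ (B (s • x)) (s • x))
      Filter.atTop Filter.atTop :=
    (Real.tendsto_exp_atTop.comp ((tendsto_natCast_atTop_atTop.atTop_mul_const hτ).const_mul_atTop
      hr)).atTop_mul_const hV0
  obtain ⟨n, hn⟩ := (htend.eventually_gt_atTop (‖B‖ * min ρ ε₀ * min ρ ε₀)).exists
  exact (hbound n).not_gt hn
end

section
/- (Łojasiewicz convergence theorem for the damped second order system.) Let Φ : ℝ^N → ℝ be twice continuously differentiable and assume that at every critical point a (i.e. ∇Φ(a) = 0) there exist c_a > 0, σ_a > 0 and θ_a ∈ (0,1/2] such that ‖∇Φ(u)‖ ≥ c_a·|Φ(u) − Φ(a)|^{1−θ_a} whenever ‖u − a‖ < σ_a (this holds in particular when Φ is real analytic). Let u : [0,∞) → ℝ^N be a twice differentiable solution of u″ + u′ + ∇Φ(u) = 0 such that u and u′ are bounded. Then there exists a ∈ ℝ^N with ∇Φ(a) = 0 such that ‖u′(t)‖ +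 ‖u(t) − a‖ → 0 as t → ∞. Moreover, if θ ∈ (0,1/2] is any exponent for which the above inequality holds at a, then ‖u(t) − a‖ ≤ C·t^{−θ/(1−2θ)} if 0 < θ < 1/2, and ‖u(t) − a‖ ≤ C·e^{−δt} for some δ > 0 if θ = 1/2. -/
open Filter Set

open scoped Topology RealInnerProductSpace

theorem sub_le_mul_sub_of_hasDerivAt_le {f f' : ℝ → ℝ} {a b C : ℝ} (hab : a ≤ b)
    (hf : ∀ t ∈ Icc a b, HasDerivAt f (f' t) t) (hC : ∀ t ∈ Icc a b, f' t ≤ C) :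
    f b - f a ≤ C * (b - a) := by
  rcases hab.eq_or_lt with rfl | hlt
  · simp
  obtain ⟨x, hx, hfx⟩ := exists_hasDerivAt_eq_slope f f' hlt
    (fun t ht => (hf t ht).continuousAt.continuousWithinAt)
    (fun t ht => hf t (Ioo_subset_Icc_self ht))
  have hle := hC x (Ioo_subset_Icc_self hx)
  rwa [hfx, div_le_iff₀ (sub_pos.2 hlt)] at hle

/-- A function on the half line whose derivative is nonpositive and which is bounded below
converges at infinity to a lower bound. -/
theorem exists_tendsto_atTop_of_deriv_nonpos {h h' : ℝ → ℝ} {m : ℝ}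
    (hh : ∀ t ≥ (0:ℝ), HasDerivAt h (h' t) t) (hneg : ∀ t ≥ (0:ℝ), h' t ≤ 0)
    (hm : ∀ t ≥ (0:ℝ), m ≤ h t) :
    ∃ l, Tendsto h atTop (𝓝 l) ∧ ∀ t ≥ (0:ℝ), l ≤ h t := by
  have hanti : Antitone fun t => h (max t 0) := by
    intro s t hst
    have hle : max s 0 ≤ max t 0 := max_le_max_right 0 hst
    have hpos : 0 ≤ max s 0 := le_max_right s 0
    have := sub_le_mul_sub_of_hasDerivAt_le (C := 0) hle
      (fun x hx => hh x (hpos.trans hx.1)) (fun x hx => hneg x (hpos.trans hx.1))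
    simp only
    linarith
  have hbdd : BddBelow (range fun t => h (max t 0)) :=
    ⟨m, by rintro _ ⟨t, rfl⟩; exact hm _ (le_max_right t 0)⟩
  refine ⟨_, (tendsto_atTop_ciInf hanti hbdd).congr' ?_, fun t ht => ?_⟩
  · filter_upwards [eventually_ge_atTop 0] with t ht
    rw [max_eq_left ht]
  · simpa [max_eq_left ht] using ciInf_le hbdd t

/-- A Barbălat type lemma: a nonnegative dissipation rate whose derivative is bounded below
vanishes at infinity. -/
theorem tendsto_zero_of_dissipation {h h' w w' : ℝ → ℝ} {e L l : ℝ} (he : 0 < e)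
    (hh : ∀ t ≥ (0:ℝ), HasDerivAt h (h' t) t) (hdis : ∀ t ≥ (0:ℝ), h' t ≤ -e * w t)
    (hw : ∀ t ≥ (0:ℝ), HasDerivAt w (w' t) t) (hw0 : ∀ t, 0 ≤ w t)
    (hL : ∀ t ≥ (0:ℝ), -L ≤ w' t) (hl : Tendsto h atTop (𝓝 l)) :
    Tendsto w atTop (𝓝 0) := by
  have hLpos : 0 < |L| + 1 := by positivity
  rw [Metric.tendsto_atTop]
  intro η hη
  set d : ℝ := η / (2 * (|L| + 1)) with hd
  have hdpos : 0 < d := by positivity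
  have hdL : (|L| + 1) * d = η / 2 := by rw [hd]; field_simp
  have hdiff : Tendsto (fun t => h (t + d) - h t) atTop (𝓝 0) := by
    simpa using (hl.comp (tendsto_atTop_add_const_right atTop d tendsto_id)).sub hl
  have hev : ∀ᶠ t in atTop, -(e * (η / 2) * d) < h (t + d) - h t :=
    hdiff.eventually_const_lt (by simp only [Left.neg_neg_iff]; positivity)
  obtain ⟨T, hT⟩ := (hev.and (eventually_ge_atTop 0)).exists_forall_of_atTop
  refine ⟨T, fun t ht => ?_⟩
  obtain ⟨h1, ht0⟩ := hT t ht
  rw [Real.dist_0_eq_abs, abs_of_nonneg (hw0 t)]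
  by_contra! hcon
  have hlow : ∀ s ∈ Icc t (t + d), η / 2 ≤ w s := by
    intro s hs
    have := sub_le_mul_sub_of_hasDerivAt_le (f := fun x => -w x) (C := |L| + 1) hs.1
      (fun x hx => (hw x (ht0.trans hx.1)).neg)
      (fun x hx => by linarith [hL x (ht0.trans hx.1), le_abs_self L])
    nlinarith [hs.2]
  have := sub_le_mul_sub_of_hasDerivAt_le (f := h) (f' := h') (C := -(e * (η / 2)))
    (a := t) (b := t + d) (by linarith)
    (fun x hx => hh x (ht0.trans hx.1))
    (fun x hx => by
      have := hdis x (ht0.trans hx.1)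
      have := mul_le_mul_of_nonneg_left (hlow x hx) he.le
      linarith)
  have e1 : t + d - t = d := by ring
  rw [e1] at this
  linarith

section Length

variable {E : Type*} [NormedAddCommGroup E] [NormedSpace ℝ E]

/-- Finite length estimate: while the Łojasiewicz type inequality `h ^ (1 - θ) ≤ K * √w` holds in
the ball of radius `σ` around `a`, the curve `u` cannot leave this ball. -/
theorem norm_sub_le_of_lojasiewicz {u u' : ℝ → E} {h h' w : ℝ → ℝ} {a : E} {s θ K e σ : ℝ}
    (hθ : 0 < θ) (hK : 0 < K) (he : 0 < e)
    (hu : ∀ t ≥ s, HasDerivAt u (u' t) t) (hh : ∀ t ≥ s, HasDerivAt h (h' t) t)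
    (hpos : ∀ t ≥ s, 0 < h t) (hdis : ∀ t ≥ s, h' t ≤ -e * w t) (hw : ∀ t, 0 ≤ w t)
    (huw : ∀ t ≥ s, ‖u' t‖ ≤ √(w t))
    (hloj : ∀ t ≥ s, ‖u t - a‖ < σ → h t ^ (1 - θ) ≤ K * √(w t))
    (hstart : ‖u s - a‖ + 2 * K / (θ * e) * h s ^ θ < σ) :
    ∀ t ≥ s, ‖u t - u s‖ ≤ 2 * K / (θ * e) * h s ^ θ := by
  intro t ht
  set C : ℝ := 2 * K / (θ * e) with hC
  have hCpos : 0 < C := by positivity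
  have hB : ∀ x ≥ s, HasDerivAt (fun x => C * (h s ^ θ - h x ^ θ))
      (C * (-(h' x * θ * h x ^ (θ - 1)))) x := fun x hx =>
    (((hh x hx).rpow_const (Or.inl (hpos x hx).ne')).const_sub _).const_mul C
  have key : ‖u t - u s‖ ≤ C * (h s ^ θ - h t ^ θ) := by
    refine image_norm_le_of_norm_deriv_right_lt_deriv_boundary' (a := s) (b := t)
      (f := fun x => u x - u s) (f' := u')
      (fun x hx => ((hu x hx.1).sub_const _).continuousAt.continuousWithinAt)
      (fun x hx => ((hu x hx.1).sub_const _).hasDerivWithinAt)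
      (B := fun x => C * (h s ^ θ - h x ^ θ)) (B' := fun x => C * (-(h' x * θ * h x ^ (θ - 1))))
      (by simp)
      (fun x hx => (hB x hx.1).continuousAt.continuousWithinAt)
      (fun x hx => (hB x hx.1).hasDerivWithinAt) ?_ (right_mem_Icc.2 ht)
    intro x hx hxB
    have hx1 : s ≤ x := hx.1
    have hhx := hpos x hx1
    have hball : ‖u x - a‖ < σ := by
      have h1 : ‖u x - a‖ ≤ ‖u x - u s‖ + ‖u s - a‖ := norm_sub_le_norm_sub_add_norm_sub _ _ _
      have h2 : 0 ≤ C * h x ^ θ := by positivity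
      linarith
    have hL := hloj x hx1 hball
    have hp1 : 0 < h x ^ (1 - θ) := Real.rpow_pos_of_pos hhx _
    have hp2 : 0 < h x ^ (θ - 1) := Real.rpow_pos_of_pos hhx _
    have hprod : h x ^ (1 - θ) * h x ^ (θ - 1) = 1 := by
      rw [← Real.rpow_add hhx]; simp
    have hsq : 0 < √(w x) := by
      by_contra! hcon
      nlinarith
    have h1 : 1 ≤ K * √(w x) * h x ^ (θ - 1) := by
      simpa only [hprod] using mul_le_mul_of_nonneg_right hL hp2.le
    have hww : √(w x) * √(w x) = w x := Real.mul_self_sqrt (hw x)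
    have h2 : C * θ * h x ^ (θ - 1) * (e * w x) ≤ C * (-(h' x * θ * h x ^ (θ - 1))) := by
      have h3 : 0 ≤ C * θ * h x ^ (θ - 1) := by positivity
      have := mul_le_mul_of_nonneg_left (hdis x hx1) h3
      linarith
    have h4 : C * θ * h x ^ (θ - 1) * (e * w x)
        = 2 * √(w x) * (K * √(w x) * h x ^ (θ - 1)) := by
      rw [hC]
      field_simp
      linear_combination -hww
    have h5 : 2 * √(w x) * 1 ≤ 2 * √(w x) * (K * √(w x) * h x ^ (θ - 1)) :=
      mul_le_mul_of_nonneg_left h1 (by positivity)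
    linarith [huw x hx1]
  have : 0 ≤ C * h t ^ θ := mul_nonneg hCpos.le (Real.rpow_nonneg (hpos t ht).le _)
  linarith

end Length

/-- A decay estimate valid for large times extends to all times where the curve is bounded. -/
theorem exists_pos_bound_of_eventual_bound {E : Type*} [NormedAddCommGroup E]
    {v : ℝ → E} {f : ℝ → ℝ} {t₀ T R C : ℝ}
    (hR : ∀ t ≥ t₀, ‖v t‖ ≤ R) (hf : ∀ t ≥ t₀, 0 < f t) (hanti : AntitoneOn f (Ici t₀))
    (hT : ∀ t ≥ T, ‖v t‖ ≤ C * f t) :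
    ∃ C' > 0, ∀ t ≥ t₀, ‖v t‖ ≤ C' * f t := by
  have hm : 0 < f (max T t₀) := hf _ (le_max_right _ _)
  have hR0 : 0 ≤ R := (norm_nonneg _).trans (hR t₀ le_rfl)
  refine ⟨|C| + R / f (max T t₀) + 1, by positivity, fun t ht => ?_⟩
  have hft := hf t ht
  rcases le_total T t with hTt | htT
  · refine (hT t hTt).trans (mul_le_mul_of_nonneg_right ?_ hft.le)
    have : 0 ≤ R / f (max T t₀) := by positivity
    linarith [le_abs_self C]
  · have hle : f (max T t₀) ≤ f t :=
      hanti ht (mem_Ici.2 (le_max_right _ _)) (htT.trans (le_max_left _ _))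
    calc ‖v t‖ ≤ R := hR t ht
      _ = R / f (max T t₀) * f (max T t₀) := by field_simp
      _ ≤ R / f (max T t₀) * f t := mul_le_mul_of_nonneg_left hle (by positivity)
      _ ≤ _ := mul_le_mul_of_nonneg_right (by linarith [abs_nonneg C]) hft.le

theorem rpow_le_of_deriv_le_rpow {h h' : ℝ → ℝ} {T γ θ : ℝ} (hθ : 0 < θ) (hθ' : θ < 1 / 2)
    (hγ : 0 < γ) (hT : 0 ≤ T)
    (hh : ∀ t ≥ T, HasDerivAt h (h' t) t) (hpos : ∀ t ≥ T, 0 < h t)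
    (hdec : ∀ t ≥ T, h' t ≤ -γ * h t ^ (2 * (1 - θ))) :
    ∃ C, ∀ t ≥ 2 * T + 1, h t ^ θ ≤ C * t ^ (-(θ / (1 - 2 * θ))) := by
  set q : ℝ := 1 - 2 * θ with hq
  have hqpos : 0 < q := by linarith
  have hgrow : ∀ t ≥ T, q * γ * (t - T) ≤ h t ^ (-q) := by
    intro t ht
    have := sub_le_mul_sub_of_hasDerivAt_le (f := fun x => -(h x ^ (-q))) (C := -(q * γ)) ht
      (fun x hx => ((hh x hx.1).rpow_const (p := -q) (Or.inl (hpos x hx.1).ne')).neg)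
      (fun x hx => by
        have hx0 := hpos x hx.1
        have h1 : h x ^ (2 * (1 - θ)) * h x ^ (-q - 1) = 1 := by
          rw [← Real.rpow_add hx0]
          have : 2 * (1 - θ) + (-q - 1) = 0 := by rw [hq]; ring
          rw [this, Real.rpow_zero]
        have h2 : 0 ≤ q * h x ^ (-q - 1) := mul_nonneg hqpos.le (Real.rpow_nonneg hx0.le _)
        have h3 := mul_le_mul_of_nonneg_left (hdec x hx.1) h2
        have h4 : q * h x ^ (-q - 1) * (-γ * h x ^ (2 * (1 - θ))) = -(q * γ) := by
          linear_combination (-(q * γ)) * h1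
        linarith)
    have h0 : 0 < h T ^ (-q) := Real.rpow_pos_of_pos (hpos T le_rfl) _
    linarith
  refine ⟨(q * γ / 2) ^ (-(θ / q)), fun t ht => ?_⟩
  have htT : T ≤ t := by linarith
  have ht0 : 0 < t := by linarith
  have hlow : q * γ / 2 * t ≤ h t ^ (-q) := by
    refine le_trans ?_ (hgrow t htT)
    have : q * γ * (t / 2) ≤ q * γ * (t - T) :=
      mul_le_mul_of_nonneg_left (by linarith) (by positivity)
    linarith
  have hp := Real.rpow_le_rpow_of_nonpos (z := -(θ / q)) (by positivity) hlow
    (by rw [Left.neg_nonpos_iff]; positivity)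
  rw [← Real.rpow_mul (hpos t htT).le, Real.mul_rpow (by positivity) ht0.le] at hp
  have e1 : -q * -(θ / q) = θ := by field_simp
  rwa [e1] at hp

theorem sqrt_le_exp_of_deriv_le {h h' : ℝ → ℝ} {T γ : ℝ}
    (hh : ∀ t ≥ T, HasDerivAt h (h' t) t) (hdec : ∀ t ≥ T, h' t ≤ -γ * h t) :
    ∃ C, ∀ t ≥ T, √(h t) ≤ C * Real.exp (-(γ / 2) * t) := by
  refine ⟨√(h T * Real.exp (γ * T)), fun t ht => ?_⟩
  have := sub_le_mul_sub_of_hasDerivAt_le (f := fun x => h x * Real.exp (γ * x)) (C := 0) ht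
    (fun x hx => (hh x hx.1).mul (((hasDerivAt_id x).const_mul γ).exp))
    (fun x hx => by
      have h1 := mul_le_mul_of_nonneg_right (hdec x hx.1) (Real.exp_pos (γ * x)).le
      simp only [id_eq, mul_one]
      linarith)
  have h2 : h t ≤ h T * Real.exp (γ * T) * Real.exp (-(γ * t)) := by
    have h3 : h t * Real.exp (γ * t) ≤ h T * Real.exp (γ * T) := by linarith
    have h4 := mul_le_mul_of_nonneg_right h3 (Real.exp_pos (-(γ * t))).le
    rwa [mul_assoc, ← Real.exp_add, add_neg_cancel, Real.exp_zero, mul_one] at h4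
  calc √(h t) ≤ √(h T * Real.exp (γ * T) * Real.exp (-(γ * t))) := Real.sqrt_le_sqrt h2
    _ = _ := by
      rw [Real.sqrt_mul' _ (Real.exp_pos _).le, Real.sqrt_eq_rpow (Real.exp _), ← Real.exp_mul]
      ring_nf

/-- The Łojasiewicz inequality passes from the potential to the modified energy
`p ^ 2 / 2 + φ + ε * ⟪g, p⟫`. -/
theorem modified_energy_rpow_le {φ p g i h ε θ c : ℝ} (hε : 0 ≤ ε) (hε' : ε ≤ 1 / 2)
    (hθ : 0 < θ) (hθ' : θ ≤ 1 / 2) (hc : 0 < c)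
    (hi : i ≤ g * p) (hw : p ^ 2 + g ^ 2 ≤ 1) (hh : h = p ^ 2 / 2 + φ + ε * i) (hh0 : 0 ≤ h)
    (hloj : c * |φ| ^ (1 - θ) ≤ g) :
    h ^ (1 - θ) ≤ (1 / c + 1) * √(p ^ 2 + g ^ 2) := by
  have hw0 : 0 ≤ p ^ 2 + g ^ 2 := by positivity
  have h1 : h ≤ |φ| + (p ^ 2 + g ^ 2) := by
    have h2 : ε * i ≤ ε * (g * p) := mul_le_mul_of_nonneg_left hi hε
    have h3 : ε * (g * p) ≤ ε * ((p ^ 2 + g ^ 2) / 2) :=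
      mul_le_mul_of_nonneg_left (by nlinarith [sq_nonneg (g - p)]) hε
    have h4 : ε * ((p ^ 2 + g ^ 2) / 2) ≤ 1 / 2 * ((p ^ 2 + g ^ 2) / 2) :=
      mul_le_mul_of_nonneg_right hε' (by positivity)
    nlinarith [le_abs_self φ, sq_nonneg p, sq_nonneg g]
  have h5 : (p ^ 2 + g ^ 2) ^ (1 - θ) ≤ √(p ^ 2 + g ^ 2) := by
    rw [Real.sqrt_eq_rpow]
    exact Real.rpow_le_rpow_of_exponent_ge_of_imp hw0 hw (by linarith) (by intro _ _; linarith)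
  have h6 : |φ| ^ (1 - θ) ≤ 1 / c * √(p ^ 2 + g ^ 2) := by
    have : g ≤ √(p ^ 2 + g ^ 2) := Real.le_sqrt_of_sq_le (by nlinarith [sq_nonneg p])
    rw [one_div, ← div_eq_inv_mul, le_div_iff₀ hc]
    linarith
  calc h ^ (1 - θ) ≤ (|φ| + (p ^ 2 + g ^ 2)) ^ (1 - θ) :=
        Real.rpow_le_rpow hh0 h1 (by linarith)
    _ ≤ |φ| ^ (1 - θ) + (p ^ 2 + g ^ 2) ^ (1 - θ) :=
        Real.rpow_add_le_add_rpow (abs_nonneg _) hw0 (by linarith) (by linarith)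
    _ ≤ _ := by linarith

section Gradient

variable {E : Type*} [NormedAddCommGroup E] [InnerProductSpace ℝ E]

theorem ContDiff.gradient_one [CompleteSpace E] {Φ : E → ℝ} (hΦ : ContDiff ℝ 2 Φ) :
    ContDiff ℝ 1 (gradient Φ) :=
  (InnerProductSpace.toDual ℝ E).symm.contDiff.comp (hΦ.fderiv_right (m := 1) (by norm_num))

/-- Along a bounded solution of `u'' + u' + ∇Φ(u) = 0`, the modified energy
`‖u'‖² / 2 + Φ(u) + ε ⟪∇Φ(u), u'⟫` is bounded below and dissipates `‖u'‖² + ‖∇Φ(u)‖²`. -/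
theorem exists_modified_energy_dissipation [ProperSpace E] {Φ : E → ℝ} (hΦ : ContDiff ℝ 2 Φ)
    {u u' u'' : ℝ → E}
    (hu1 : ∀ t ≥ (0:ℝ), HasDerivAt u (u' t) t)
    (hu2 : ∀ t ≥ (0:ℝ), HasDerivAt u' (u'' t) t)
    (heq : ∀ t ≥ (0:ℝ), u'' t + u' t + gradient Φ (u t) = 0)
    {M : ℝ} (hbdd : ∀ t ≥ (0:ℝ), ‖u t‖ ≤ M ∧ ‖u' t‖ ≤ M) :
    ∃ ε > 0, ε ≤ 1 / 2 ∧ ∃ (dH dw : ℝ → ℝ) (m L : ℝ), ∀ t ≥ (0:ℝ),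
      HasDerivAt (fun t => ‖u' t‖ ^ 2 / 2 + Φ (u t) + ε * ⟪gradient Φ (u t), u' t⟫) (dH t) t ∧
      dH t ≤ -(ε / 2) * (‖u' t‖ ^ 2 + ‖gradient Φ (u t)‖ ^ 2) ∧
      m ≤ ‖u' t‖ ^ 2 / 2 + Φ (u t) + ε * ⟪gradient Φ (u t), u' t⟫ ∧
      HasDerivAt (fun t => ‖u' t‖ ^ 2 + ‖gradient Φ (u t)‖ ^ 2) (dw t) t ∧ -L ≤ dw t := by
  set g := gradient Φ with hg
  have hg1 : ContDiff ℝ 1 g := hΦ.gradient_one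
  have hcomp : IsCompact (Metric.closedBall (0 : E) M) := isCompact_closedBall _ _
  obtain ⟨P, hP⟩ := hcomp.exists_bound_of_continuousOn hΦ.continuous.continuousOn
  obtain ⟨K, hK⟩ := hcomp.exists_bound_of_continuousOn hg1.continuous.continuousOn
  obtain ⟨L, hL⟩ := hcomp.exists_bound_of_continuousOn
    (hg1.continuous_fderiv one_ne_zero).continuousOn
  have hmem : ∀ t ≥ (0:ℝ), u t ∈ Metric.closedBall (0 : E) M := fun t ht => by
    simpa using (hbdd t ht).1
  have hL0 : 0 ≤ L := (norm_nonneg _).trans (hL _ (hmem 0 le_rfl))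
  have hK0 : 0 ≤ K := (norm_nonneg _).trans (hK _ (hmem 0 le_rfl))
  have hM0 : 0 ≤ M := (norm_nonneg _).trans (hbdd 0 le_rfl).1
  have hdg : ∀ t ≥ (0:ℝ), HasDerivAt (fun t => g (u t)) (fderiv ℝ g (u t) (u' t)) t :=
    fun t ht => ((hg1.differentiable one_ne_zero) (u t)).hasFDerivAt.comp_hasDerivAt t (hu1 t ht)
  have hdΦ : ∀ t ≥ (0:ℝ), HasDerivAt (fun t => Φ (u t)) ⟪g (u t), u' t⟫ t := fun t ht => by
    have := ((hΦ.differentiable two_ne_zero) (u t)).hasGradientAt.hasFDerivAt.comp_hasDerivAt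
      t (hu1 t ht)
    exact this
  have hdgn : ∀ t ≥ (0:ℝ), ‖fderiv ℝ g (u t) (u' t)‖ ≤ L * ‖u' t‖ := fun t ht =>
    (ContinuousLinearMap.le_opNorm _ _).trans
      (mul_le_mul_of_nonneg_right (hL _ (hmem t ht)) (norm_nonneg _))
  have hacc : ∀ t ≥ (0:ℝ), u'' t = -u' t - g (u t) := fun t ht => by
    have := heq t ht
    rw [add_assoc, add_eq_zero_iff_eq_neg] at this
    rw [this]; abel
  refine ⟨1 / (2 + L), by positivity, one_div_le_one_div_of_le two_pos (by linarith),
    fun t => 2 * ⟪u' t, u'' t⟫ / 2 + ⟪g (u t), u' t⟫ +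
      1 / (2 + L) * (⟪g (u t), u'' t⟫ + ⟪fderiv ℝ g (u t) (u' t), u' t⟫),
    fun t => 2 * ⟪u' t, u'' t⟫ + 2 * ⟪g (u t), fderiv ℝ g (u t) (u' t)⟫,
    -(P + 1 / (2 + L) * (K * M)), 2 * (M * (M + K)) + 2 * (K * (L * M)), fun t ht => ?_⟩
  have hε : 0 < 1 / (2 + L) := by positivity
  set ε := 1 / (2 + L) with hεdef
  have hεL : ε * (L + 2) = 1 := by rw [hεdef]; field_simp; ring
  have hut := (hbdd t ht).2
  have hgt := hK _ (hmem t ht)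
  have hp0 := norm_nonneg (u' t)
  have hg0 := norm_nonneg (g (u t))
  refine ⟨(((hu2 t ht).norm_sq.div_const 2).add (hdΦ t ht)).add
    (((hdg t ht).inner ℝ (hu2 t ht)).const_mul ε), ?_, ?_,
    (hu2 t ht).norm_sq.add (hdg t ht).norm_sq, ?_⟩
  · beta_reduce
    rw [hacc t ht]
    simp only [inner_sub_right, inner_neg_right, real_inner_self_eq_norm_sq]
    rw [real_inner_comm (g (u t)) (u' t)]
    have h1 : ⟪fderiv ℝ g (u t) (u' t), u' t⟫ ≤ L * ‖u' t‖ ^ 2 := by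
      refine (real_inner_le_norm _ _).trans ?_
      nlinarith [hdgn t ht]
    have h2 : -⟪g (u t), u' t⟫ ≤ (‖u' t‖ ^ 2 + ‖g (u t)‖ ^ 2) / 2 := by
      have := (neg_le_abs _).trans (abs_real_inner_le_norm (g (u t)) (u' t))
      nlinarith [sq_nonneg (‖u' t‖ - ‖g (u t)‖)]
    have h3 := mul_le_mul_of_nonneg_left (add_le_add h1 h2) hε.le
    have h4 : ε * (L + 2) * ‖u' t‖ ^ 2 = ‖u' t‖ ^ 2 := by rw [hεL, one_mul]
    nlinarith [mul_nonneg hε.le (sq_nonneg ‖u' t‖)]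
  · have h1 := (abs_le.1 (hP _ (hmem t ht))).1
    have h2 := (abs_le.1 (abs_real_inner_le_norm (g (u t)) (u' t))).1
    have h3 : ‖g (u t)‖ * ‖u' t‖ ≤ K * M := mul_le_mul hgt hut hp0 hK0
    have h4 : ε * (-(K * M)) ≤ ε * ⟪g (u t), u' t⟫ :=
      mul_le_mul_of_nonneg_left (by linarith) hε.le
    nlinarith [sq_nonneg ‖u' t‖]
  · have h1 := (abs_le.1 (abs_real_inner_le_norm (u' t) (u'' t))).1
    have h2 := (abs_le.1 (abs_real_inner_le_norm (g (u t)) (fderiv ℝ g (u t) (u' t)))).1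
    have h3 : ‖u'' t‖ ≤ M + K := by
      rw [hacc t ht]
      refine (norm_sub_le _ _).trans ?_
      rw [norm_neg]; linarith
    have h4 : ‖u' t‖ * ‖u'' t‖ ≤ M * (M + K) := mul_le_mul hut h3 (norm_nonneg _) hM0
    have h5 : ‖g (u t)‖ * ‖fderiv ℝ g (u t) (u' t)‖ ≤ K * (L * M) :=
      mul_le_mul hgt ((hdgn t ht).trans (mul_le_mul_of_nonneg_left hut hL0)) (norm_nonneg _) hK0
    linarith

end Gradient

/-- Theorem 9.2.3 (Łojasiewicz convergence theorem for the damped second order system):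
every bounded solution of `u'' + u' + ∇Φ(u) = 0` converges to a critical point `a`,
with the corresponding decay rates given by a Łojasiewicz exponent of `Φ` at `a`. -/
theorem stmt_14 {N : ℕ} (Φ : EuclideanSpace ℝ (Fin N) → ℝ) (hΦ : ContDiff ℝ 2 Φ)
    (hLoj : ∀ a : EuclideanSpace ℝ (Fin N), gradient Φ a = 0 →
      ∃ c > 0, ∃ σ > 0, ∃ θ ∈ Set.Ioc (0:ℝ) (1/2),
        ∀ v : EuclideanSpace ℝ (Fin N), ‖v - a‖ < σ →
          c * |Φ v - Φ a| ^ (1 - θ) ≤ ‖gradient Φ v‖)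
    (u u' u'' : ℝ → EuclideanSpace ℝ (Fin N))
    (hu1 : ∀ t ≥ (0:ℝ), HasDerivAt u (u' t) t)
    (hu2 : ∀ t ≥ (0:ℝ), HasDerivAt u' (u'' t) t)
    (heq : ∀ t ≥ (0:ℝ), u'' t + u' t + gradient Φ (u t) = 0)
    (hbdd : ∃ M : ℝ, ∀ t ≥ (0:ℝ), ‖u t‖ ≤ M ∧ ‖u' t‖ ≤ M) :
    ∃ a : EuclideanSpace ℝ (Fin N), gradient Φ a = 0 ∧
      Filter.Tendsto (fun t => ‖u' t‖ + ‖u t - a‖) Filter.atTop (nhds 0) ∧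
      ∀ θ ∈ Set.Ioc (0:ℝ) (1/2), ∀ c > (0:ℝ), ∀ σ > (0:ℝ),
        (∀ v : EuclideanSpace ℝ (Fin N), ‖v - a‖ < σ →
          c * |Φ v - Φ a| ^ (1 - θ) ≤ ‖gradient Φ v‖) →
        ((θ < 1/2 → ∃ C > (0:ℝ), ∀ t ≥ (1:ℝ),
            ‖u t - a‖ ≤ C * t ^ (-(θ / (1 - 2 * θ)))) ∧
         (θ = 1/2 → ∃ δ > (0:ℝ), ∃ C > (0:ℝ), ∀ t ≥ (0:ℝ),
            ‖u t - a‖ ≤ C * Real.exp (-δ * t))) := by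
  obtain ⟨M, hM⟩ := hbdd
  obtain ⟨ε, hε, hε', dH, dw, m, L, hall⟩ :=
    exists_modified_energy_dissipation hΦ hu1 hu2 heq hM
  set w : ℝ → ℝ := fun t => ‖u' t‖ ^ 2 + ‖gradient Φ (u t)‖ ^ 2 with hwdef
  set H : ℝ → ℝ := fun t => ‖u' t‖ ^ 2 / 2 + Φ (u t) + ε * ⟪gradient Φ (u t), u' t⟫ with hHdef
  have hw : ∀ t, 0 ≤ w t := fun t => by positivity
  have hdH : ∀ t ≥ (0:ℝ), HasDerivAt H (dH t) t := fun t ht => (hall t ht).1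
  have hdis : ∀ t ≥ (0:ℝ), dH t ≤ -(ε / 2) * w t := fun t ht => (hall t ht).2.1
  have hneg : ∀ t ≥ (0:ℝ), dH t ≤ 0 := fun t ht =>
    (hdis t ht).trans (by nlinarith [hw t])
  obtain ⟨l, hl, hHl⟩ := exists_tendsto_atTop_of_deriv_nonpos hdH hneg
    (fun t ht => (hall t ht).2.2.1)
  have hw_lim : Tendsto w atTop (𝓝 0) := tendsto_zero_of_dissipation (half_pos hε) hdH hdis
    (fun t ht => (hall t ht).2.2.2.1) hw (fun t ht => (hall t ht).2.2.2.2) hl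
  have hsqrt_lim : Tendsto (fun t => √(w t)) atTop (𝓝 0) := by simpa using hw_lim.sqrt
  have hu'w : ∀ t, ‖u' t‖ ≤ √(w t) := fun t => Real.le_sqrt_of_sq_le (by simp [hwdef])
  have hgw : ∀ t, ‖gradient Φ (u t)‖ ≤ √(w t) := fun t =>
    Real.le_sqrt_of_sq_le (by simp [hwdef])
  have hu'_lim : Tendsto u' atTop (𝓝 0) := squeeze_zero_norm hu'w hsqrt_lim
  have hg_lim : Tendsto (fun t => gradient Φ (u t)) atTop (𝓝 0) := squeeze_zero_norm hgw hsqrt_lim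
  have hΦ_lim : Tendsto (fun t => Φ (u t)) atTop (𝓝 l) := by
    have h1 : Tendsto (fun t => H t - ‖u' t‖ ^ 2 / 2 - ε * ⟪gradient Φ (u t), u' t⟫) atTop
        (𝓝 (l - ‖(0 : EuclideanSpace ℝ (Fin N))‖ ^ 2 / 2
          - ε * ⟪(0 : EuclideanSpace ℝ (Fin N)), 0⟫)) :=
      (hl.sub ((hu'_lim.norm.pow 2).div_const 2)).sub ((hg_lim.inner hu'_lim).const_mul ε)
    simp only [norm_zero, inner_zero_left, mul_zero, sub_zero, ne_eq, OfNat.ofNat_ne_zero,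
      not_false_eq_true, zero_pow, zero_div] at h1
    exact h1.congr fun t => by simp only [hHdef]; ring
  set U : Ultrafilter ℝ := Ultrafilter.of atTop with hU
  have hUle : (U : Filter ℝ) ≤ atTop := Ultrafilter.of_le atTop
  obtain ⟨a, -, ha⟩ := (isCompact_closedBall (0 : EuclideanSpace ℝ (Fin N)) M).ultrafilter_le_nhds
    (U.map u) (by
      rw [le_principal_iff]
      exact hUle ((eventually_ge_atTop 0).mono fun t ht => by simpa using (hM t ht).1))
  have ha : Tendsto u U (𝓝 a) := ha
  have hga : gradient Φ a = 0 := tendsto_nhds_unique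
    ((hΦ.gradient_one.continuous.tendsto a).comp ha) (hg_lim.mono_left hUle)
  have hΦa : Φ a = l := tendsto_nhds_unique
    ((hΦ.continuous.tendsto a).comp ha) (hΦ_lim.mono_left hUle)
  set h : ℝ → ℝ := fun t => H t - Φ a with hhdef
  have hdh : ∀ t ≥ (0:ℝ), HasDerivAt h (dH t) t := fun t ht => (hdH t ht).sub_const _
  have hh0 : ∀ t ≥ (0:ℝ), 0 ≤ h t := fun t ht => by
    have := hHl t ht
    simp only [hhdef, hΦa]; linarith
  have hh_lim : Tendsto h atTop (𝓝 0) := by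
    simpa [hhdef, hΦa] using hl.sub_const l
  have hbound : ∀ t ≥ (0:ℝ), ‖u t - a‖ ≤ M + ‖a‖ := fun t ht =>
    (norm_sub_le _ _).trans (by linarith [(hM t ht).1])
  suffices hmain : Tendsto u atTop (𝓝 a) ∧ ∀ θ ∈ Set.Ioc (0:ℝ) (1/2), ∀ c > (0:ℝ), ∀ σ > (0:ℝ),
      (∀ v : EuclideanSpace ℝ (Fin N), ‖v - a‖ < σ →
        c * |Φ v - Φ a| ^ (1 - θ) ≤ ‖gradient Φ v‖) →
      ((θ < 1/2 → ∃ T C, ∀ t ≥ T, ‖u t - a‖ ≤ C * t ^ (-(θ / (1 - 2 * θ)))) ∧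
        (θ = 1/2 → ∃ δ > (0:ℝ), ∃ T C, ∀ t ≥ T, ‖u t - a‖ ≤ C * Real.exp (-δ * t))) by
    obtain ⟨hconv, hrate⟩ := hmain
    refine ⟨a, hga, ?_, fun θ hθ c hc σ hσ hloj => ⟨fun hθ2 => ?_, fun hθ2 => ?_⟩⟩
    · simpa using hu'_lim.norm.add (tendsto_iff_norm_sub_tendsto_zero.1 hconv)
    · obtain ⟨T, C, hT⟩ := (hrate θ hθ c hc σ hσ hloj).1 hθ2
      have hexp : 0 ≤ θ / (1 - 2 * θ) := div_nonneg hθ.1.le (by linarith)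
      exact exists_pos_bound_of_eventual_bound (v := fun t => u t - a)
        (fun t ht => hbound t (zero_le_one.trans ht))
        (fun t ht => Real.rpow_pos_of_pos (zero_lt_one.trans_le ht) _)
        (fun x hx y _ hxy => Real.rpow_le_rpow_of_nonpos (zero_lt_one.trans_le hx) hxy
          (neg_nonpos.2 hexp)) hT
    · obtain ⟨δ, hδ, T, C, hT⟩ := (hrate θ hθ c hc σ hσ hloj).2 hθ2
      exact ⟨δ, hδ, exists_pos_bound_of_eventual_bound (v := fun t => u t - a) hbound
        (fun t _ => Real.exp_pos _)
        (fun x _ y _ hxy => Real.exp_le_exp.2 (by nlinarith)) hT⟩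
  by_cases hzero : ∃ T ≥ (0:ℝ), h T = 0
  · obtain ⟨T, hT0, hT⟩ := hzero
    have hhz : ∀ t ≥ T, h t = 0 := fun t ht => by
      have := sub_le_mul_sub_of_hasDerivAt_le (C := 0) ht
        (fun x hx => hdh x (hT0.trans hx.1)) (fun x hx => hneg x (hT0.trans hx.1))
      linarith [hh0 t (hT0.trans ht)]
    have hu'z : ∀ t ≥ T + 1, u' t = 0 := fun t ht => by
      have ht0 : 0 ≤ t := by linarith
      have hz : HasDerivAt h 0 t := (hasDerivAt_const t (0:ℝ)).congr_of_eventuallyEq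
        ((eventually_ge_nhds (by linarith : T < t)).mono fun x hx => hhz x hx)
      have hd := hdis t ht0
      rw [(hdh t ht0).unique hz] at hd
      have hwz : w t = 0 := le_antisymm (by nlinarith) (hw t)
      simpa [hwz] using hu'w t
    have hconst : ∀ t ≥ T + 1, u t = u (T + 1) := fun t ht =>
      constant_of_has_deriv_right_zero (a := T + 1) (b := t)
        (fun x hx => (hu1 x (by linarith [hx.1])).continuousAt.continuousWithinAt)
        (fun x hx => by
          have := (hu1 x (by linarith [hx.1])).hasDerivWithinAt (s := Ici x)
          rwa [hu'z x hx.1] at this) t (right_mem_Icc.2 ht)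
    have hev : Tendsto u atTop (𝓝 (u (T + 1))) := tendsto_const_nhds.congr'
      ((eventually_ge_atTop (T + 1)).mono fun t ht => (hconst t ht).symm)
    have hau : u (T + 1) = a := tendsto_nhds_unique (hev.mono_left hUle) ha
    refine ⟨hau ▸ hev, fun θ _ c _ σ _ _ => ⟨fun _ => ⟨T + 1, 0, fun t ht => ?_⟩,
      fun _ => ⟨1, one_pos, T + 1, 0, fun t ht => ?_⟩⟩⟩
    all_goals simp [hconst t ht, hau]
  · have hhpos : ∀ t ≥ (0:ℝ), 0 < h t := fun t ht =>
      (hh0 t ht).lt_of_ne fun hz => hzero ⟨t, ht, hz.symm⟩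
    obtain ⟨T₁, hT₁⟩ := ((hw_lim.eventually_le_const one_pos).and
      (eventually_ge_atTop 0)).exists_forall_of_atTop
    have henergy : ∀ θ ∈ Set.Ioc (0:ℝ) (1/2), ∀ c > (0:ℝ), ∀ σ > (0:ℝ),
        (∀ v : EuclideanSpace ℝ (Fin N), ‖v - a‖ < σ →
          c * |Φ v - Φ a| ^ (1 - θ) ≤ ‖gradient Φ v‖) →
        ∀ t ≥ T₁, ‖u t - a‖ < σ → h t ^ (1 - θ) ≤ (1 / c + 1) * √(w t) :=
      fun θ hθ c hc σ hσ hloj t ht htσ =>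
        modified_energy_rpow_le hε.le hε' hθ.1 hθ.2 hc (real_inner_le_norm _ _) (hT₁ t ht).1
          (by simp only [hhdef, hHdef]; ring) (hh0 t (hT₁ t ht).2) (hloj _ htσ)
    have hlength : ∀ θ ∈ Set.Ioc (0:ℝ) (1/2), ∀ c > (0:ℝ), ∀ σ > (0:ℝ),
        (∀ v : EuclideanSpace ℝ (Fin N), ‖v - a‖ < σ →
          c * |Φ v - Φ a| ^ (1 - θ) ≤ ‖gradient Φ v‖) →
        ∃ C > 0, ∀ s ≥ T₁, ‖u s - a‖ + C * h s ^ θ < σ →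
          ∀ t ≥ s, ‖u t - u s‖ ≤ C * h s ^ θ := by
      intro θ hθ c hc σ hσ hloj
      have hθ0 := hθ.1
      have hT0 : ∀ s ≥ T₁, ∀ t ≥ s, 0 ≤ t := fun s hs t ht => (hT₁ t (hs.trans ht)).2
      refine ⟨2 * (1 / c + 1) / (θ * (ε / 2)), by positivity, fun s hs hstart => ?_⟩
      exact norm_sub_le_of_lojasiewicz hθ0 (by positivity) (half_pos hε)
        (fun t ht => hu1 t (hT0 s hs t ht)) (fun t ht => hdh t (hT0 s hs t ht))
        (fun t ht => hhpos t (hT0 s hs t ht)) (fun t ht => hdis t (hT0 s hs t ht)) hw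
        (fun t _ => hu'w t)
        (fun t ht => henergy θ hθ c hc σ hσ hloj t (hs.trans ht)) hstart
    have hpow_lim : ∀ θ > (0:ℝ), ∀ C : ℝ, Tendsto (fun t => C * h t ^ θ) atTop (𝓝 0) :=
      fun θ hθ C => by
        simpa [Real.zero_rpow hθ.ne'] using (hh_lim.rpow_const (Or.inr hθ.le)).const_mul C
    have hconv : Tendsto u atTop (𝓝 a) := by
      obtain ⟨c, hc, σ, hσ, θ, hθ, hloj⟩ := hLoj a hga
      obtain ⟨C, hC, hlen⟩ := hlength θ hθ c hc σ hσ hloj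
      rw [Metric.tendsto_atTop]
      intro η hη
      have hη' : 0 < min η σ / 2 := half_pos (lt_min hη hσ)
      have hnear : ∀ᶠ s in (U : Filter ℝ), ‖u s - a‖ < min η σ / 2 :=
        (tendsto_iff_norm_sub_tendsto_zero.1 ha).eventually_lt_const hη'
      obtain ⟨s, hs1, hs2, hs3⟩ := (hnear.and ((((hpow_lim θ hθ.1 C).eventually_lt_const hη').and
        (eventually_ge_atTop T₁)).filter_mono hUle)).exists
      refine ⟨s, fun t ht => ?_⟩
      have h1 := hlen s hs3 (by linarith [min_le_right η σ]) t ht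
      have h2 : ‖u t - a‖ ≤ ‖u t - u s‖ + ‖u s - a‖ := norm_sub_le_norm_sub_add_norm_sub _ _ _
      rw [dist_eq_norm]
      linarith [min_le_left η σ]
    refine ⟨hconv, fun θ hθ c hc σ hσ hloj => ?_⟩
    obtain ⟨C, hC, hlen⟩ := hlength θ hθ c hc σ hσ hloj
    have hdist := tendsto_iff_norm_sub_tendsto_zero.1 hconv
    have hstart : ∀ᶠ s in atTop, ‖u s - a‖ + C * h s ^ θ < σ := by
      have := hdist.add (hpow_lim θ hθ.1 C)
      rw [add_zero] at this
      exact this.eventually_lt_const hσ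
    obtain ⟨T, hT⟩ := ((hstart.and (eventually_ge_atTop T₁)).and
      (eventually_ge_atTop 0)).exists_forall_of_atTop
    have htail : ∀ s ≥ T, ‖u s - a‖ ≤ C * h s ^ θ := fun s hs => by
      have h1 : Tendsto (fun t => ‖u t - u s‖) atTop (𝓝 ‖a - u s‖) := (hconv.sub_const _).norm
      rw [norm_sub_rev]
      exact le_of_tendsto h1 ((eventually_ge_atTop s).mono fun t ht =>
        hlen s (hT s hs).1.2 (hT s hs).1.1 t ht)
    set K : ℝ := 1 / c + 1 with hK
    have hKpos : 0 < K := by positivity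
    set γ : ℝ := ε / 2 / K ^ 2 with hγ
    have hγpos : 0 < γ := by positivity
    have hdec : ∀ t ≥ T, dH t ≤ -γ * h t ^ (2 * (1 - θ)) := fun t ht => by
      have ht0 := (hT t ht).2
      have hnear : ‖u t - a‖ < σ := by
        have : 0 ≤ C * h t ^ θ := mul_nonneg hC.le (Real.rpow_nonneg (hh0 t ht0) _)
        linarith [(hT t ht).1.1]
      have h1 := henergy θ hθ c hc σ hσ hloj t (hT t ht).1.2 hnear
      have h2 : h t ^ (2 * (1 - θ)) ≤ K ^ 2 * w t := by
        rw [mul_comm 2, Real.rpow_mul (hh0 t ht0), Real.rpow_two]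
        calc (h t ^ (1 - θ)) ^ 2 ≤ (K * √(w t)) ^ 2 :=
              pow_le_pow_left₀ (Real.rpow_nonneg (hh0 t ht0) _) h1 2
          _ = K ^ 2 * w t := by rw [mul_pow, Real.sq_sqrt (hw t)]
      have h3 := mul_le_mul_of_nonneg_left h2 hγpos.le
      have h4 : γ * (K ^ 2 * w t) = ε / 2 * w t := by rw [hγ]; field_simp
      linarith [hdis t ht0]
    have hT0 : 0 ≤ T := (hT T le_rfl).2
    refine ⟨fun hθ2 => ?_, fun hθ2 => ?_⟩
    · obtain ⟨C', hC'⟩ := rpow_le_of_deriv_le_rpow hθ.1 hθ2 hγpos hT0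
        (fun t ht => hdh t (hT0.trans ht)) (fun t ht => hhpos t (hT0.trans ht)) hdec
      refine ⟨2 * T + 1, C * C', fun t ht => (htail t (by linarith)).trans ?_⟩
      rw [mul_assoc]
      exact mul_le_mul_of_nonneg_left (hC' t ht) hC.le
    · subst hθ2
      obtain ⟨C', hC'⟩ := sqrt_le_exp_of_deriv_le (γ := γ) (fun t ht => hdh t (hT0.trans ht))
        (fun t ht => by
          have := hdec t ht
          norm_num at this
          linarith)
      refine ⟨γ / 2, half_pos hγpos, T, C * C', fun t ht => (htail t ht).trans ?_⟩
      rw [mul_assoc, ← Real.sqrt_eq_rpow]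
      exact mul_le_mul_of_nonneg_left (hC' t ht) hC.le
end

section
/- (Convergence for the second order system with degenerate nonlinear damping.) Let Φ : ℝ^N → ℝ be twice continuously differentiable, let α ≥ 0, and let g : ℝ^N → ℝ^N be continuous with ⟨g(v),v⟩ ≥ c·‖v‖^{α+2} and ‖g(v)‖ ≤ C·‖v‖^{α+1} for all v ∈ ℝ^N, for some constants c, C > 0. Let S = {a ∈ ℝ^N : ∇Φ(a) = 0} and assume there exists θ ∈ (0,1/2] such that for every a ∈ S there is σ_a > 0 with ‖∇Φ(u)‖ ≥ |Φ(u) − Φ(a)|^{1−θ} for all u ∈ B(a,σ_a). Assume α ∈ [0, θ/(1−θ)), and let u : [0,∞) → ℝ^N be a twice differentiable solution of u″ + g(u′) + ∇Φ(u) = 0 such that u, u′ and u″ are bounded. Then there exists a ∈ S such that ‖u′(t)‖ + ‖u(t) − a‖ → 0 as t → ∞, and moreover ‖u(t) − a‖ = O(t^{−(θ−α(1−θ))/(1−2θ+α(1−θ))}). -/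
open Filter Set Asymptotics
open scoped RealInnerProductSpace

lemma sub_le_mul_of_hasDerivAt_le {H H' : ℝ → ℝ} {s t C : ℝ} (hst : s ≤ t)
    (hH : ∀ r ∈ Icc s t, HasDerivAt H (H' r) r) (hC : ∀ r ∈ Icc s t, H' r ≤ C) :
    H t - H s ≤ C * (t - s) := by
  refine (convex_Icc s t).image_sub_le_mul_sub_of_deriv_le
    (fun r hr => (hH r hr).continuousAt.continuousWithinAt)
    (fun r hr => (hH r (interior_subset hr)).differentiableAt.differentiableWithinAt)
    (fun r hr => ?_) s ⟨le_rfl, hst⟩ t ⟨hst, le_rfl⟩ hst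
  rw [(hH r (interior_subset hr)).deriv]
  exact hC r (interior_subset hr)

lemma exists_hasDerivAt_norm_rpow_mul_inner {E : Type*} [NormedAddCommGroup E]
    [InnerProductSpace ℝ E] {α : ℝ} (hα : 0 ≤ α) {p v : ℝ → E} {p' v' : E} {t : ℝ}
    (hp : HasDerivAt p p' t) (hv : HasDerivAt v v' t) :
    ∃ D, HasDerivAt (fun s => ‖p s‖ ^ α * ⟪p s, v s⟫) D t ∧
      |D - ‖p t‖ ^ α * ⟪p t, v'⟫| ≤ (1 + α) * (‖p t‖ ^ α * (‖p'‖ * ‖v t‖)) := by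
  have hinner := hp.inner ℝ hv
  rcases hα.eq_or_lt with rfl | hα
  · refine ⟨_, by simpa using hinner, ?_⟩
    simpa using abs_real_inner_le_norm p' (v t)
  by_cases h0 : p t = 0
  · refine ⟨0, ?_, by simp [h0, Real.zero_rpow hα.ne']⟩
    rw [hasDerivAt_iff_isLittleO]
    have h1 : (fun s => ‖p s‖ ^ α) =o[nhds t] (fun _ => (1 : ℝ)) := by
      rw [isLittleO_one_iff]
      have := (hp.continuousAt.norm.rpow_const (Or.inr hα.le) : ContinuousAt (fun s => ‖p s‖ ^ α) t)
      simpa [ContinuousAt, h0, Real.zero_rpow hα.ne'] using this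
    have h2 := hinner.isBigO_sub
    simpa [h0] using h1.mul_isBigO h2
  · have hn : 0 < ‖p t‖ := norm_pos_iff.2 h0
    have e : (fun s => ‖p s‖ ^ α) = fun s => (‖p s‖ ^ 2) ^ (α / 2) := by
      funext s
      rw [← Real.rpow_natCast, ← Real.rpow_mul (norm_nonneg _)]
      congr 1; push_cast; ring
    have h1 := hp.norm_sq.rpow_const (p := α / 2) (Or.inl (by positivity))
    have e2 : (‖p t‖ ^ 2) ^ (α / 2 - 1) * ‖p t‖ ^ 2 = ‖p t‖ ^ α := by
      rw [Real.rpow_sub_one (by positivity), congrFun e t]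
      field_simp
    rw [← e] at h1
    refine ⟨_, h1.mul hinner, ?_⟩
    set X := (‖p t‖ ^ 2) ^ (α / 2 - 1)
    have hX : 0 ≤ X := by positivity
    have a1 := abs_real_inner_le_norm (p t) p'
    have a2 := abs_real_inner_le_norm (p t) (v t)
    have a3 := abs_real_inner_le_norm p' (v t)
    have : 2 * ⟪p t, p'⟫ * (α / 2) * X * ⟪p t, v t⟫
        + ‖p t‖ ^ α * (⟪p t, v'⟫ + ⟪p', v t⟫) - ‖p t‖ ^ α * ⟪p t, v'⟫
        = α * X * (⟪p t, p'⟫ * ⟪p t, v t⟫) + ‖p t‖ ^ α * ⟪p', v t⟫ := by ring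
    rw [this]
    calc _ ≤ |α * X * (⟪p t, p'⟫ * ⟪p t, v t⟫)| + |‖p t‖ ^ α * ⟪p', v t⟫| := abs_add_le _ _
      _ = α * X * (|⟪p t, p'⟫| * |⟪p t, v t⟫|) + ‖p t‖ ^ α * |⟪p', v t⟫| := by
        rw [abs_mul, abs_mul (‖p t‖ ^ α), abs_mul ⟪p t, p'⟫,
          abs_of_nonneg (show 0 ≤ α * X by positivity),
          abs_of_nonneg (show 0 ≤ ‖p t‖ ^ α by positivity)]
      _ ≤ α * X * ((‖p t‖ * ‖p'‖) * (‖p t‖ * ‖v t‖)) + ‖p t‖ ^ α * (‖p'‖ * ‖v t‖) := by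
        gcongr
      _ = (1 + α) * (‖p t‖ ^ α * (‖p'‖ * ‖v t‖)) := by
        rw [← e2]; ring

lemma tendsto_zero_of_hasDerivAt_le_neg_norm_rpow {E : Type*} [NormedAddCommGroup E]
    [NormedSpace ℝ E] {x x' : ℝ → E} {H H' : ℝ → ℝ} {L δ q l : ℝ} (hδ : 0 < δ) (hq : 0 < q)
    (hx : ∀ t ≥ 0, HasDerivAt x (x' t) t) (hL : ∀ t ≥ 0, ‖x' t‖ ≤ L)
    (hH : ∀ t ≥ 0, HasDerivAt H (H' t) t) (hH' : ∀ t ≥ 0, H' t ≤ -(δ * ‖x t‖ ^ q))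
    (hl : Tendsto H atTop (nhds l)) : Tendsto x atTop (nhds 0) := by
  have hL0 : 0 ≤ L := (norm_nonneg _).trans (hL 0 le_rfl)
  rw [Metric.tendsto_atTop]
  intro ε hε
  set τ := ε / (2 * (L + 1)) with hτ
  have hτ0 : 0 < τ := by positivity
  have h1 : Tendsto (fun t => H t - H (t + τ)) atTop (nhds 0) := by
    simpa using hl.sub (hl.comp (tendsto_atTop_add_const_right _ τ tendsto_id))
  have h2 : ∀ᶠ t in atTop, H t - H (t + τ) < δ * (ε / 2) ^ q * τ :=
    h1.eventually_lt_const (by positivity)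
  obtain ⟨T, hT⟩ := eventually_atTop.1 (h2.and (eventually_ge_atTop 0))
  refine ⟨T, fun t ht => ?_⟩
  obtain ⟨hlt, ht0⟩ := hT t ht
  rw [dist_zero_right]
  by_contra! hcon
  refine absurd hlt (not_lt.2 ?_)
  have := sub_le_mul_of_hasDerivAt_le (H := H) (H' := H') (s := t) (t := t + τ)
    (C := -(δ * (ε / 2) ^ q)) (by linarith) (fun r hr => hH r (ht0.trans hr.1)) fun r hr => by
      have hr0 : 0 ≤ r := ht0.trans hr.1
      refine (hH' r hr0).trans (neg_le_neg ?_)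
      have hd := Convex.norm_image_sub_le_of_norm_hasDerivWithin_le (f := x) (f' := x') (C := L)
        (fun s (hs : s ∈ Ici (0 : ℝ)) => (hx s hs).hasDerivWithinAt) (fun s hs => hL s hs)
        (convex_Ici 0) hr0 ht0
      have hb : L * ‖t - r‖ ≤ ε / 2 := by
        have : ‖t - r‖ ≤ τ := by
          rw [Real.norm_eq_abs, abs_le]; constructor <;> linarith [hr.1, hr.2]
        calc L * ‖t - r‖ ≤ (L + 1) * τ := by gcongr; linarith
          _ = ε / 2 := by rw [hτ]; field_simp
      have hn : ‖x t‖ ≤ ‖x t - x r‖ + ‖x r‖ := by simpa using norm_add_le (x t - x r) (x r)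
      have : ε / 2 ≤ ‖x r‖ := by linarith
      gcongr
  linarith

/-- A solution trapped near `a` by a Łojasiewicz-type decreasing function `ψ` converges to `a`. -/
lemma eventually_norm_sub_le_of_clusterPt {E : Type*} [NormedAddCommGroup E]
    [NormedSpace ℝ E] {u v : ℝ → E} {ψ ψ' : ℝ → ℝ} {a : E} {σ T : ℝ} (hσ : 0 < σ)
    (hu : ∀ t ≥ T, HasDerivAt u (v t) t) (hψ : ∀ t ≥ T, HasDerivAt ψ (ψ' t) t)
    (hψ0 : ∀ t ≥ T, 0 ≤ ψ t) (hψlim : Tendsto ψ atTop (nhds 0))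
    (hlt : ∀ t ≥ T, u t ∈ Metric.ball a σ → ‖v t‖ < -ψ' t)
    (ha : ∃ φ : ℕ → ℝ, Tendsto φ atTop atTop ∧ Tendsto (u ∘ φ) atTop (nhds a)) :
    ∀ᶠ t in atTop, u t ∈ Metric.ball a σ ∧ ‖u t - a‖ ≤ ψ t := by
  obtain ⟨φ, hφ, hua⟩ := ha
  have key : ∀ s ≥ T, ‖u s - a‖ + ψ s < σ → ∀ t ≥ s, ‖u t - u s‖ ≤ ψ s - ψ t := by
    intro s hs hsσ t hst
    refine image_norm_le_of_norm_deriv_right_lt_deriv_boundary' (f := fun t => u t - u s)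
      (f' := v) (B := fun t => ψ s - ψ t) (B' := fun t => -ψ' t) (a := s) (b := t)
      (fun r hr => ((hu r (hs.le.trans hr.1)).sub_const _).continuousAt.continuousWithinAt)
      (fun r hr => ((hu r (hs.le.trans hr.1)).sub_const _).hasDerivWithinAt) (by simp)
      (fun r hr => ((hψ r (hs.le.trans hr.1)).const_sub _).continuousAt.continuousWithinAt)
      (fun r hr => ((hψ r (hs.le.trans hr.1)).const_sub _).hasDerivWithinAt) ?_ ⟨hst, le_rfl⟩
    intro r hr hrB
    have hrT : T ≤ r := hs.le.trans hr.1
    refine hlt r hrT ?_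
    rw [mem_ball_iff_norm]
    have := norm_add_le (u r - u s) (u s - a)
    rw [sub_add_sub_cancel] at this
    linarith [hψ0 r hrT]
  have hsmall : Tendsto (fun n => ‖u (φ n) - a‖ + ψ (φ n)) atTop (nhds 0) := by
    have h1 := (hua.sub_const a).norm
    simpa using h1.add (hψlim.comp hφ)
  obtain ⟨n, hnσ, hnT⟩ := ((hsmall.eventually_lt_const hσ).and
    (hφ.eventually_ge_atTop T)).exists
  set s := φ n
  filter_upwards [eventually_ge_atTop s] with t hst
  have htT : T ≤ t := hnT.trans hst
  have h1 := key s hnT hnσ t hst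
  have h2 := norm_add_le (u t - u s) (u s - a)
  rw [sub_add_sub_cancel] at h2
  have h3 : ‖u t - a‖ + ψ t < σ := by linarith
  refine ⟨by rw [mem_ball_iff_norm]; linarith [hψ0 t htT], ?_⟩
  have h4 : Tendsto (fun m => ‖u (φ m) - u t‖) atTop (nhds ‖a - u t‖) := (hua.sub_const _).norm
  rw [norm_sub_rev]
  refine le_of_tendsto h4 ?_
  filter_upwards [hφ.eventually_ge_atTop t] with m hm
  linarith [key t htT h3 (φ m) hm, hψ0 (φ m) (htT.trans hm)]

lemma isBigO_rpow_of_hasDerivAt_le {h h' : ℝ → ℝ} {κ d T : ℝ} (hκ : 0 < κ) (hd : 0 < d)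
    (hpos : ∀ t ≥ T, 0 < h t) (hh : ∀ t ≥ T, HasDerivAt h (h' t) t)
    (hle : ∀ t ≥ T, κ * h t ^ (1 + d) ≤ -h' t) :
    h =O[atTop] fun t : ℝ => t ^ (-(1 / d)) := by
  refine IsBigO.of_bound ((d * κ / 2) ^ (-(1 / d))) ?_
  filter_upwards [eventually_ge_atTop T, eventually_ge_atTop (2 * T), eventually_gt_atTop 0]
    with t htT ht2 ht0
  have hy := sub_le_mul_of_hasDerivAt_le (H := fun r => -(h r ^ (-d)))
    (H' := fun r => -(h' r * (-d) * h r ^ (-d - 1))) (C := -(d * κ)) htT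
    (fun r hr => ((hh r hr.1).rpow_const (Or.inl (hpos r hr.1).ne')).neg) fun r hr => by
      have hr := hr.1
      have h1 : h r ^ (1 + d) * h r ^ (-d - 1) = 1 := by
        rw [← Real.rpow_add (hpos r hr)]
        ring_nf
        exact Real.rpow_zero _
      have h2 := mul_le_mul_of_nonneg_right (hle r hr) (Real.rpow_nonneg (hpos r hr).le (-d - 1))
      rw [mul_assoc, h1] at h2
      nlinarith
  have hT := Real.rpow_nonneg (hpos T le_rfl).le (-d)
  have h3 : d * κ / 2 * t ≤ h t ^ (-d) := by
    have : 0 < d * κ := by positivity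
    nlinarith
  have h4 : h t = (h t ^ (-d)) ^ (-(1 / d)) := by
    rw [← Real.rpow_mul (hpos t htT).le]
    rw [show -d * -(1 / d) = 1 by field_simp, Real.rpow_one]
  rw [Real.norm_of_nonneg (hpos t htT).le, Real.norm_of_nonneg (by positivity),
    ← Real.mul_rpow (by positivity) ht0.le, h4]
  exact Real.rpow_le_rpow_of_nonpos (by positivity) h3 (by simp [hd.le])

lemma exists_mul_rpow_add_le {α K : ℝ} (hα : 0 ≤ α) (hK : 0 ≤ K) :
    ∃ K' : ℝ, 0 < K' ∧ ∀ x y : ℝ, 0 ≤ x → 0 ≤ y →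
      K * (y ^ (α + 1) * x + y ^ α * x ^ 2) ≤ 1 / 2 * y ^ (α + 2) + K' * x ^ (α + 2) := by
  set η : ℝ := 1 / (4 * (K + 1)) with hη
  have hη0 : 0 < η := by positivity
  have hη1 : η ≤ 1 := by
    rw [hη, div_le_one (by positivity)]; linarith
  have hKη : K * η ≤ 1 / 4 := by
    rw [hη, mul_one_div, div_le_iff₀ (by positivity)]; linarith
  have e2 : ∀ z : ℝ, 0 ≤ z → z ^ (α + 2) = z ^ α * z ^ 2 := fun z hz => by
    rw [Real.rpow_add_of_nonneg hz hα (by norm_num)]; norm_num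
  have e1 : ∀ z : ℝ, 0 ≤ z → z ^ (α + 1) = z ^ α * z := fun z hz => by
    rw [Real.rpow_add_of_nonneg hz hα (by norm_num)]; norm_num
  refine ⟨K * ((1 / η) ^ (α + 1) + (1 / η) ^ α) + 1, by positivity, fun x y hx hy => ?_⟩
  rw [e2 x hx, e2 y hy, e1 y hy, e1 _ (by positivity)]
  have hxα : 0 ≤ x ^ α := by positivity
  have hyα : 0 ≤ y ^ α := by positivity
  rcases le_total x (η * y) with h | h
  · have h1 : y * x + x ^ 2 ≤ 2 * η * y ^ 2 := by
      nlinarith [mul_le_mul_of_nonneg_left h hy, mul_le_mul_of_nonneg_left h hx,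
        mul_nonneg hx hy, sq_nonneg y, mul_nonneg hη0.le (sq_nonneg y)]
    calc K * (y ^ α * y * x + y ^ α * x ^ 2) = y ^ α * (K * (y * x + x ^ 2)) := by ring
      _ ≤ y ^ α * (K * (2 * η * y ^ 2)) := by gcongr
      _ = y ^ α * (2 * (K * η) * y ^ 2) := by ring
      _ ≤ y ^ α * (2 * (1 / 4) * y ^ 2) := by gcongr
      _ = 1 / 2 * (y ^ α * y ^ 2) := by ring
      _ ≤ _ := le_add_of_nonneg_right (by positivity)
  · have hyx : y ≤ 1 / η * x := by
      rw [one_div, ← div_eq_inv_mul, le_div_iff₀ hη0]; linarith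
    have h2 : y ^ α ≤ (1 / η) ^ α * x ^ α := by
      rw [← Real.mul_rpow (by positivity) hx]; gcongr
    calc K * (y ^ α * y * x + y ^ α * x ^ 2)
        ≤ K * ((1 / η) ^ α * x ^ α * (1 / η * x) * x + (1 / η) ^ α * x ^ α * x ^ 2) := by gcongr
      _ = K * ((1 / η) ^ α * (1 / η) + (1 / η) ^ α) * (x ^ α * x ^ 2) := by ring
      _ ≤ _ := by
        have : 0 ≤ x ^ α * x ^ 2 := by positivity
        have : 0 ≤ y ^ α * y ^ 2 := by positivity
        linarith

/-- The perturbed energy `‖v‖² / 2 + F + ε ‖p‖ ^ α ⟪p, v⟫` is a strict Lyapunov functional. -/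
lemma exists_lyapunov {E : Type*} [NormedAddCommGroup E] [InnerProductSpace ℝ E]
    {α c C L M P : ℝ} (hα : 0 ≤ α) (hc : 0 < c) (hC : 0 < C) (hL : 0 ≤ L)
    {p v p' v' G : ℝ → E} {F : ℝ → ℝ}
    (hp : ∀ t ≥ 0, HasDerivAt p (p' t) t) (hv : ∀ t ≥ 0, HasDerivAt v (v' t) t)
    (hF : ∀ t ≥ 0, HasDerivAt F ⟪p t, v t⟫ t) (heq : ∀ t ≥ 0, v' t + G t + p t = 0)
    (hG1 : ∀ t ≥ 0, c * ‖v t‖ ^ (α + 2) ≤ ⟪G t, v t⟫)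
    (hG2 : ∀ t ≥ 0, ‖G t‖ ≤ C * ‖v t‖ ^ (α + 1))
    (hp' : ∀ t ≥ 0, ‖p' t‖ ≤ L * ‖v t‖) (hM : ∀ t ≥ 0, ‖v t‖ ≤ M) (hP : ∀ t ≥ 0, ‖p t‖ ≤ P) :
    ∃ (H H' : ℝ → ℝ) (δ K : ℝ), 0 < δ ∧ 0 < K ∧ ∀ t ≥ 0, HasDerivAt H (H' t) t ∧
      H' t ≤ -(δ * (‖v t‖ ^ (α + 2) + ‖p t‖ ^ (α + 2))) ∧
      |H t - F t| ≤ K * (‖v t‖ + ‖p t‖) ^ 2 := by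
  have hM0 : 0 ≤ M := (norm_nonneg _).trans (hM 0 le_rfl)
  have hP0 : 0 ≤ P := (norm_nonneg _).trans (hP 0 le_rfl)
  obtain ⟨K', hK'0, hK'⟩ := exists_mul_rpow_add_le hα
    (show 0 ≤ C * M ^ α + (1 + α) * L by positivity)
  have hD : ∀ t, ∃ D, 0 ≤ t → HasDerivAt (fun s => ‖p s‖ ^ α * ⟪p s, v s⟫) D t ∧
      |D - ‖p t‖ ^ α * ⟪p t, v' t⟫| ≤ (1 + α) * (‖p t‖ ^ α * (‖p' t‖ * ‖v t‖)) := by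
    intro t
    by_cases ht : 0 ≤ t
    · obtain ⟨D, h⟩ := exists_hasDerivAt_norm_rpow_mul_inner hα (hp t ht) (hv t ht)
      exact ⟨D, fun _ => h⟩
    · exact ⟨0, fun h => absurd h ht⟩
  choose D hD using hD
  set ε := c / (2 * K') with hε
  have hε0 : 0 < ε := by positivity
  have hεK : ε * K' = c / 2 := by rw [hε]; field_simp
  refine ⟨fun t => 1 / 2 * ‖v t‖ ^ 2 + F t + ε * (‖p t‖ ^ α * ⟪p t, v t⟫),
    fun t => 1 / 2 * (2 * ⟪v t, v' t⟫) + ⟪p t, v t⟫ + ε * D t, min (c / 2) (ε / 2),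
    1 + ε * P ^ α, by positivity, by positivity, fun t ht => ⟨?_, ?_, ?_⟩⟩
  · exact (((hv t ht).norm_sq.const_mul _).add (hF t ht)).add ((hD t ht).1.const_mul _)
  · have hv' : v' t = -G t - p t := by
      rw [← sub_eq_zero, ← heq t ht]; abel
    have h1 := (abs_le.1 (hD t ht).2).2
    have h2 := hK' ‖v t‖ ‖p t‖ (norm_nonneg _) (norm_nonneg _)
    have hG := hG1 t ht
    have hxα : ‖v t‖ ^ (α + 1) ≤ M ^ α * ‖v t‖ := by
      rw [Real.rpow_add_of_nonneg (norm_nonneg _) hα (by norm_num), Real.rpow_one]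
      gcongr
      exact hM t ht
    have e1 : ‖p t‖ ^ (α + 1) = ‖p t‖ ^ α * ‖p t‖ := by
      rw [Real.rpow_add_of_nonneg (norm_nonneg _) hα (by norm_num), Real.rpow_one]
    have e2 : ‖p t‖ ^ (α + 2) = ‖p t‖ ^ α * ‖p t‖ ^ 2 := by
      rw [Real.rpow_add_of_nonneg (norm_nonneg _) hα (by norm_num)]; norm_num
    have hpG : -(‖p t‖ ^ α * ⟪p t, G t⟫) ≤ C * M ^ α * (‖p t‖ ^ (α + 1) * ‖v t‖) := by
      calc -(‖p t‖ ^ α * ⟪p t, G t⟫) = ‖p t‖ ^ α * -⟪p t, G t⟫ := by ring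
        _ ≤ ‖p t‖ ^ α * (‖p t‖ * ‖G t‖) := by
          gcongr
          exact (neg_le_abs _).trans (abs_real_inner_le_norm _ _)
        _ ≤ ‖p t‖ ^ α * (‖p t‖ * (C * (M ^ α * ‖v t‖))) := by
          gcongr
          exact (hG2 t ht).trans (by gcongr)
        _ = _ := by rw [e1]; ring
    have hpp : (1 + α) * (‖p t‖ ^ α * (‖p' t‖ * ‖v t‖))
        ≤ (1 + α) * L * (‖p t‖ ^ α * ‖v t‖ ^ 2) := by
      calc _ ≤ (1 + α) * (‖p t‖ ^ α * (L * ‖v t‖ * ‖v t‖)) := by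
            gcongr
            exact hp' t ht
        _ = _ := by ring
    have hi : ‖p t‖ ^ α * ⟪p t, v' t⟫ = -(‖p t‖ ^ α * ⟪p t, G t⟫) - ‖p t‖ ^ (α + 2) := by
      rw [hv', inner_sub_right, inner_neg_right, real_inner_self_eq_norm_sq, e2]; ring
    have hDt : D t ≤ -(1 / 2 * ‖p t‖ ^ (α + 2)) + K' * ‖v t‖ ^ (α + 2) := by
      have e0 : 0 ≤ (1 + α) * L * (‖p t‖ ^ (α + 1) * ‖v t‖) := by positivity
      have e0' : 0 ≤ C * M ^ α * (‖p t‖ ^ α * ‖v t‖ ^ 2) := by positivity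
      linarith
    have hvv : ⟪v t, v' t⟫ = -⟪G t, v t⟫ - ⟪p t, v t⟫ := by
      rw [hv', inner_sub_right, inner_neg_right, real_inner_comm, real_inner_comm (p t)]
    have h5 := mul_le_mul_of_nonneg_left hDt hε0.le
    have m1 : min (c / 2) (ε / 2) * ‖v t‖ ^ (α + 2) ≤ c / 2 * ‖v t‖ ^ (α + 2) := by
      gcongr; exact min_le_left _ _
    have m2 : min (c / 2) (ε / 2) * ‖p t‖ ^ (α + 2) ≤ ε / 2 * ‖p t‖ ^ (α + 2) := by
      gcongr; exact min_le_right _ _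
    have h6 : ε * (K' * ‖v t‖ ^ (α + 2)) = c / 2 * ‖v t‖ ^ (α + 2) := by
      rw [← mul_assoc, hεK]
    beta_reduce
    rw [hvv]
    linarith
  · have h1 : |1 / 2 * ‖v t‖ ^ 2 + F t + ε * (‖p t‖ ^ α * ⟪p t, v t⟫) - F t|
        ≤ 1 / 2 * ‖v t‖ ^ 2 + ε * (‖p t‖ ^ α * (‖p t‖ * ‖v t‖)) := by
      rw [show 1 / 2 * ‖v t‖ ^ 2 + F t + ε * (‖p t‖ ^ α * ⟪p t, v t⟫) - F t
        = 1 / 2 * ‖v t‖ ^ 2 + ε * (‖p t‖ ^ α * ⟪p t, v t⟫) by ring]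
      refine (abs_add_le _ _).trans ?_
      rw [abs_of_nonneg (show 0 ≤ 1 / 2 * ‖v t‖ ^ 2 by positivity), abs_mul, abs_mul,
        abs_of_nonneg hε0.le, abs_of_nonneg (show 0 ≤ ‖p t‖ ^ α by positivity)]
      gcongr
      exact abs_real_inner_le_norm _ _
    have h2 : ‖p t‖ ^ α ≤ P ^ α := by
      gcongr; exact hP t ht
    refine h1.trans ?_
    have h3 : ε * (‖p t‖ ^ α * (‖p t‖ * ‖v t‖)) ≤ ε * P ^ α * (‖p t‖ * ‖v t‖) := by
      rw [mul_assoc ε]; gcongr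
    have h4 : ε * P ^ α * (‖p t‖ * ‖v t‖) ≤ ε * P ^ α * (‖v t‖ + ‖p t‖) ^ 2 := by
      gcongr
      nlinarith [norm_nonneg (p t), norm_nonneg (v t),
        mul_nonneg (norm_nonneg (p t)) (norm_nonneg (v t))]
    nlinarith [norm_nonneg (p t), norm_nonneg (v t),
      mul_nonneg (norm_nonneg (p t)) (norm_nonneg (v t))]

lemma tendsto_and_isBigO_of_lojasiewicz {E : Type*} [NormedAddCommGroup E] [NormedSpace ℝ E]
    {u v : ℝ → E} {w h h' : ℝ → ℝ} {α θ δ K σ : ℝ} {a : E} (hα : 0 ≤ α) (hθ0 : 0 < θ)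
    (hθ : θ ≤ 1 / 2) (hαθ : α < θ / (1 - θ)) (hδ : 0 < δ) (hK : 0 < K) (hσ : 0 < σ)
    (hu : ∀ t ≥ 0, HasDerivAt u (v t) t) (hh : ∀ t ≥ 0, HasDerivAt h (h' t) t)
    (hw : ∀ t ≥ 0, ‖v t‖ ≤ w t) (hh' : ∀ t ≥ 0, h' t ≤ -(δ * w t ^ (α + 2)))
    (hh0 : ∀ t ≥ 0, 0 ≤ h t) (hlim : Tendsto h atTop (nhds 0))
    (hLoj : ∀ t ≥ 0, u t ∈ Metric.ball a σ → h t ^ (1 - θ) ≤ K * w t)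
    (ha : ∃ φ : ℕ → ℝ, Tendsto φ atTop atTop ∧ Tendsto (u ∘ φ) atTop (nhds a)) :
    Tendsto u atTop (nhds a) ∧ (fun t => u t - a) =O[atTop]
      fun t : ℝ => t ^ (-((θ - α * (1 - θ)) / (1 - 2 * θ + α * (1 - θ)))) := by
  have hw0 : ∀ t ≥ 0, 0 ≤ w t := fun t ht => (norm_nonneg _).trans (hw t ht)
  by_cases hz : ∃ T ≥ 0, h T = 0
  · obtain ⟨T, hT0, hT⟩ := hz
    have hzero : ∀ t ≥ T, h t = 0 := fun t ht => by
      have := sub_le_mul_of_hasDerivAt_le ht (fun r hr => hh r (hT0.trans hr.1)) (C := 0)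
        fun r hr => (hh' r (hT0.trans hr.1)).trans (neg_nonpos.2 (by
          have := hw0 r (hT0.trans hr.1); positivity))
      exact le_antisymm (by linarith) (hh0 t (hT0.trans ht))
    have hvz : ∀ t ≥ T + 1, ‖v t‖ = 0 := fun t ht => by
      have ht0 : 0 ≤ t := by linarith
      have hd : h' t = 0 := by
        have h1 : h =ᶠ[nhds t] fun _ => 0 := by
          filter_upwards [Ioi_mem_nhds (show T < t by linarith)] with r hr using hzero r hr.le
        exact (hh t ht0).unique ((hasDerivAt_const t (0 : ℝ)).congr_of_eventuallyEq h1)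
      have h2 := hh' t ht0
      rw [hd] at h2
      refine le_antisymm ((hw t ht0).trans ?_) (norm_nonneg _)
      by_contra! hwt
      have : 0 < δ * w t ^ (α + 2) := by positivity
      linarith
    have hexp : Tendsto (fun t : ℝ => Real.exp (-t)) atTop (nhds 0) :=
      Real.tendsto_exp_neg_atTop_nhds_zero
    have hev := eventually_norm_sub_le_of_clusterPt (ψ := fun t => Real.exp (-t))
      (ψ' := fun t => Real.exp (-t) * -1) (T := T + 1) hσ
      (fun t ht => hu t (by linarith)) (fun t _ => (hasDerivAt_neg t).exp)
      (fun t _ => (Real.exp_pos _).le) hexp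
      (fun t ht _ => by rw [hvz t ht]; simpa using Real.exp_pos _) ha
    have hO : (fun t => u t - a) =O[atTop] fun t : ℝ => Real.exp (-t) :=
      IsBigO.of_bound 1 (hev.mono fun t ht => by
        rw [one_mul, Real.norm_of_nonneg (Real.exp_pos _).le]; exact ht.2)
    refine ⟨tendsto_sub_nhds_zero_iff.1 (hO.trans_tendsto hexp), hO.trans ?_⟩
    simpa using (isLittleO_exp_neg_mul_rpow_atTop one_pos
      (-((θ - α * (1 - θ)) / (1 - 2 * θ + α * (1 - θ))))).isBigO
  push Not at hz
  have hpos : ∀ t ≥ 0, 0 < h t := fun t ht => (hh0 t ht).lt_of_ne' (hz t ht)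
  set β := θ - α * (1 - θ) with hβ
  set d := 1 - 2 * θ + α * (1 - θ) with hd
  have hβ0 : 0 < β := by
    rw [lt_div_iff₀ (by linarith)] at hαθ
    linarith
  have hd0 : 0 ≤ d := by
    have : 0 ≤ α * (1 - θ) := mul_nonneg hα (by linarith)
    linarith
  set K₁ := 2 * K ^ (α + 1) / (β * δ) with hK₁
  have hK₁0 : 0 < K₁ := by positivity
  have hrpow : ∀ t ≥ 0, u t ∈ Metric.ball a σ → ∀ q : ℝ, 0 ≤ q →
      h t ^ ((1 - θ) * q) ≤ K ^ q * w t ^ q := fun t ht hb q hq => by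
    rw [Real.rpow_mul (hh0 t ht), ← Real.mul_rpow hK.le (hw0 t ht)]
    exact Real.rpow_le_rpow (by have := hh0 t ht; positivity) (hLoj t ht hb) hq
  have hwpos : ∀ t ≥ 0, u t ∈ Metric.ball a σ → 0 < w t := fun t ht hb => by
    have h1 := hLoj t ht hb
    have h2 := Real.rpow_pos_of_pos (hpos t ht) (1 - θ)
    exact pos_of_mul_pos_right (h2.trans_le h1) hK.le
  have hψlim : Tendsto (fun t => K₁ * h t ^ β) atTop (nhds 0) := by
    have := (hlim.rpow_const (p := β) (Or.inr hβ0.le)).const_mul K₁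
    simpa [Real.zero_rpow hβ0.ne'] using this
  have hev := eventually_norm_sub_le_of_clusterPt (ψ := fun t => K₁ * h t ^ β)
    (ψ' := fun t => K₁ * (h' t * β * h t ^ (β - 1))) (T := 0) hσ hu
    (fun t ht => ((hh t ht).rpow_const (Or.inl (hpos t ht).ne')).const_mul _)
    (fun t ht => by have := hpos t ht; positivity) hψlim (fun t ht hb => by
      have hwt := hwpos t ht hb
      have hht := hpos t ht
      refine (hw t ht).trans_lt ?_
      have h1 := hrpow t ht hb (α + 1) (by linarith)
      have h2 : h t ^ ((1 - θ) * (α + 1)) * h t ^ (β - 1) = 1 := by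
        rw [← Real.rpow_add hht, hβ]
        ring_nf
        exact Real.rpow_zero _
      have h3 : 1 ≤ K ^ (α + 1) * w t ^ (α + 1) * h t ^ (β - 1) := by
        exact h2.ge.trans (by gcongr)
      have h4 : w t ^ (α + 2) = w t ^ (α + 1) * w t := by
        rw [← Real.rpow_add_one hwt.ne']; ring_nf
      have h5 : δ * (w t ^ (α + 1) * w t) ≤ -h' t := by
        rw [← h4]; linarith [hh' t ht]
      calc w t < 2 * w t * 1 := by linarith
        _ ≤ 2 * w t * (K ^ (α + 1) * w t ^ (α + 1) * h t ^ (β - 1)) := by gcongr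
        _ = K₁ * (δ * (w t ^ (α + 1) * w t) * β * h t ^ (β - 1)) := by
          rw [hK₁]; field_simp
        _ ≤ K₁ * (-h' t * β * h t ^ (β - 1)) := by gcongr
        _ = _ := by ring) ha
  have hO : (fun t => u t - a) =O[atTop] fun t : ℝ => K₁ * h t ^ β :=
    IsBigO.of_bound 1 (hev.mono fun t ht => by
      rw [one_mul]; exact ht.2.trans (le_abs_self _))
  have hua : Tendsto (fun t => u t - a) atTop (nhds 0) := hO.trans_tendsto hψlim
  refine ⟨tendsto_sub_nhds_zero_iff.1 hua, ?_⟩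
  rcases hd0.eq_or_lt with hd0 | hd0
  · rw [← hd0]
    simpa using hua.isBigO_one ℝ
  obtain ⟨T, hT⟩ := eventually_atTop.1 (hev.and (eventually_ge_atTop 0))
  have hrate := isBigO_rpow_of_hasDerivAt_le (h := h) (h' := h') (T := T)
    (κ := δ / K ^ (α + 2)) (by positivity) hd0 (fun t ht => hpos t (hT t ht).2)
    (fun t ht => hh t (hT t ht).2) fun t ht => by
      obtain ⟨⟨hb, -⟩, ht0⟩ := hT t ht
      have h1 := hrpow t ht0 hb (α + 2) (by linarith)
      rw [show (1 - θ) * (α + 2) = 1 + d by rw [hd]; ring] at h1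
      calc δ / K ^ (α + 2) * h t ^ (1 + d) ≤ δ / K ^ (α + 2) * (K ^ (α + 2) * w t ^ (α + 2)) := by
            gcongr
        _ = δ * w t ^ (α + 2) := by field_simp
        _ ≤ -h' t := by linarith [hh' t ht0]
  refine hO.trans ((IsBigO.const_mul_left ?_ _))
  have h1 := hrate.rpow hβ0.le
    (by filter_upwards [eventually_ge_atTop 0] with t ht using Real.rpow_nonneg ht _)
  refine h1.congr' EventuallyEq.rfl ?_
  filter_upwards [eventually_ge_atTop 0] with t ht
  rw [← Real.rpow_mul ht]
  congr 1; ring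

lemma exists_tendsto_of_hasDerivAt_nonpos {H H' : ℝ → ℝ} {B : ℝ}
    (hH : ∀ t ≥ 0, HasDerivAt H (H' t) t) (hH' : ∀ t ≥ 0, H' t ≤ 0) (hB : ∀ t ≥ 0, B ≤ H t) :
    ∃ l, Tendsto H atTop (nhds l) ∧ ∀ t ≥ 0, l ≤ H t := by
  have hanti : ∀ s ≥ 0, ∀ t ≥ s, H t ≤ H s := fun s hs t hst => by
    have := sub_le_mul_of_hasDerivAt_le hst (fun r hr => hH r (hs.le.trans hr.1)) (C := 0)
      fun r hr => hH' r (hs.le.trans hr.1)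
    linarith
  have h1 : Antitone fun t => H (max t 0) := fun s t hst =>
    hanti _ (le_max_right _ _) _ (max_le_max_right _ hst)
  have h2 : BddBelow (range fun t => H (max t 0)) :=
    ⟨B, by rintro _ ⟨t, rfl⟩; exact hB _ (le_max_right _ _)⟩
  have h3 : Tendsto H atTop (nhds (⨅ t, H (max t 0))) :=
    (tendsto_atTop_ciInf h1 h2).congr' (by
      filter_upwards [eventually_ge_atTop 0] with t ht
      rw [max_eq_left ht])
  exact ⟨_, h3, fun t ht => le_of_tendsto h3 (by
    filter_upwards [eventually_ge_atTop t] with s hs using hanti t ht s hs)⟩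

lemma add_rpow_le_two_rpow_mul {x y q : ℝ} (hx : 0 ≤ x) (hy : 0 ≤ y) (hq : 0 ≤ q) :
    (x + y) ^ q ≤ 2 ^ q * (x ^ q + y ^ q) := by
  wlog h : x ≤ y generalizing x y
  · rw [add_comm x, add_comm (x ^ q)]
    exact this hy hx (le_of_not_ge h)
  calc (x + y) ^ q ≤ (2 * y) ^ q := by gcongr; linarith
    _ = 2 ^ q * y ^ q := Real.mul_rpow (by norm_num) hy
    _ ≤ _ := by
      gcongr
      exact le_add_of_nonneg_left (by positivity)

lemma abs_rpow_le_of_abs_sub_le {h f y w W K r : ℝ} (hr : 1 / 2 ≤ r) (hr1 : r ≤ 1) (hK : 0 < K)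
    (hw : 0 ≤ w) (hwW : w ≤ W) (hyw : y ≤ w) (hf : |f| ^ r ≤ y) (hh : |h - f| ≤ K * w ^ 2) :
    |h| ^ r ≤ (1 + K ^ r * W ^ (2 * r - 1)) * w := by
  have h1 : |h| ≤ |f| + K * w ^ 2 := by
    have := abs_add_le f (h - f)
    rw [add_sub_cancel] at this
    linarith
  have h2 : (w ^ 2) ^ r = w ^ (2 * r - 1) * w := by
    rw [← Real.rpow_natCast, ← Real.rpow_mul hw]
    nth_rewrite 3 [← Real.rpow_one w]
    rw [← Real.rpow_add_of_nonneg hw (by linarith) zero_le_one]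
    congr 1; push_cast; ring
  calc |h| ^ r ≤ (|f| + K * w ^ 2) ^ r := by gcongr
    _ ≤ |f| ^ r + (K * w ^ 2) ^ r :=
      Real.rpow_add_le_add_rpow (abs_nonneg _) (by positivity) (by linarith) hr1
    _ = |f| ^ r + K ^ r * (w ^ (2 * r - 1) * w) := by
      rw [Real.mul_rpow hK.le (by positivity), h2]
    _ ≤ w + K ^ r * (W ^ (2 * r - 1) * w) := by
      have : 0 ≤ 2 * r - 1 := by linarith
      gcongr
      exact hf.trans hyw
    _ = _ := by ring

lemma ContDiff.gradient {F : Type*} [NormedAddCommGroup F] [InnerProductSpace ℝ F]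
    [CompleteSpace F] {f : F → ℝ} (hf : ContDiff ℝ 2 f) : ContDiff ℝ 1 (gradient f) :=
  (InnerProductSpace.toDual ℝ F).symm.contDiff.comp (hf.fderiv_right (by norm_num))

/-- Theorem 9.3.6 (Chergui-type theorem): convergence with polynomial rate for the
second order system `u'' + g(u') + ∇Φ(u) = 0` with degenerate nonlinear damping of
order `α ∈ [0, θ/(1-θ))`. -/
theorem stmt_16 {N : ℕ} (Φ : EuclideanSpace ℝ (Fin N) → ℝ) (hΦ : ContDiff ℝ 2 Φ)
    (α : ℝ) (hα0 : 0 ≤ α)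
    (g : EuclideanSpace ℝ (Fin N) → EuclideanSpace ℝ (Fin N)) (hg : Continuous g)
    (c C : ℝ) (hc : 0 < c) (hC : 0 < C)
    (hg1 : ∀ v : EuclideanSpace ℝ (Fin N), c * ‖v‖ ^ (α + 2) ≤ ⟪g v, v⟫)
    (hg2 : ∀ v : EuclideanSpace ℝ (Fin N), ‖g v‖ ≤ C * ‖v‖ ^ (α + 1))
    (θ : ℝ) (hθ : θ ∈ Set.Ioc (0:ℝ) (1/2))
    (hLoj : ∀ a : EuclideanSpace ℝ (Fin N), gradient Φ a = 0 →
      ∃ σ > 0, ∀ v ∈ Metric.ball a σ, |Φ v - Φ a| ^ (1 - θ) ≤ ‖gradient Φ v‖)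
    (hαθ : α < θ / (1 - θ))
    (u u' u'' : ℝ → EuclideanSpace ℝ (Fin N))
    (hu1 : ∀ t ≥ (0:ℝ), HasDerivAt u (u' t) t)
    (hu2 : ∀ t ≥ (0:ℝ), HasDerivAt u' (u'' t) t)
    (heq : ∀ t ≥ (0:ℝ), u'' t + g (u' t) + gradient Φ (u t) = 0)
    (hbdd : ∃ M : ℝ, ∀ t ≥ (0:ℝ), ‖u t‖ ≤ M ∧ ‖u' t‖ ≤ M ∧ ‖u'' t‖ ≤ M) :
    ∃ a : EuclideanSpace ℝ (Fin N), gradient Φ a = 0 ∧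
      Filter.Tendsto (fun t => ‖u' t‖ + ‖u t - a‖) Filter.atTop (nhds 0) ∧
      (fun t => u t - a) =O[Filter.atTop]
        fun t : ℝ => t ^ (-((θ - α * (1 - θ)) / (1 - 2 * θ + α * (1 - θ)))) := by
  obtain ⟨hθ0, hθ1⟩ := hθ
  obtain ⟨M, hM⟩ := hbdd
  have hgrad := hΦ.gradient
  have hM0 : 0 ≤ M := (norm_nonneg _).trans (hM 0 le_rfl).1
  have hball : ∀ t ≥ 0, u t ∈ Metric.closedBall 0 M := fun t ht => by
    simpa using (hM t ht).1
  have hcpt := isCompact_closedBall (0 : EuclideanSpace ℝ (Fin N)) M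
  obtain ⟨P, hP⟩ := hcpt.exists_bound_of_continuousOn hgrad.continuous.continuousOn
  obtain ⟨L, hL⟩ := hcpt.exists_bound_of_continuousOn
    (hgrad.continuous_fderiv (by norm_num)).continuousOn
  obtain ⟨B, hB⟩ := hcpt.exists_bound_of_continuousOn hΦ.continuous.continuousOn
  have hL0 : 0 ≤ L := (norm_nonneg _).trans (hL _ (hball 0 le_rfl))
  set p := fun t => gradient Φ (u t) with hp
  set p' := fun t => fderiv ℝ (gradient Φ) (u t) (u' t) with hp'
  have hpd : ∀ t ≥ 0, HasDerivAt p (p' t) t := fun t ht =>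
    (hgrad.differentiable (by norm_num) (u t)).hasFDerivAt.comp_hasDerivAt t (hu1 t ht)
  have hΦd : ∀ t ≥ 0, HasDerivAt (fun t => Φ (u t)) ⟪p t, u' t⟫ t := fun t ht => by
    rw [hp, inner_gradient_left]
    exact (hΦ.differentiable (by norm_num) (u t)).hasFDerivAt.comp_hasDerivAt t (hu1 t ht)
  have hp'L : ∀ t ≥ 0, ‖p' t‖ ≤ L * ‖u' t‖ := fun t ht =>
    (ContinuousLinearMap.le_opNorm _ _).trans (by gcongr; exact hL _ (hball t ht))
  have hpP : ∀ t ≥ 0, ‖p t‖ ≤ P := fun t ht => hP _ (hball t ht)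
  obtain ⟨H, H', δ, K, hδ, hK, hH⟩ := exists_lyapunov (G := fun t => g (u' t)) hα0 hc hC hL0
    hpd hu2 hΦd heq (fun t _ => hg1 _) (fun t _ => hg2 _) hp'L (fun t ht => (hM t ht).2.1) hpP
  set w := fun t => ‖u' t‖ + ‖p t‖ with hw
  have hw0 : ∀ t, 0 ≤ w t := fun t => by positivity
  have hwW : ∀ t ≥ 0, w t ≤ M + P := fun t ht => add_le_add (hM t ht).2.1 (hpP t ht)
  obtain ⟨l, hl, hlH⟩ := exists_tendsto_of_hasDerivAt_nonpos (B := -B - K * (M + P) ^ 2)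
    (fun t ht => (hH t ht).1)
    (fun t ht => (hH t ht).2.1.trans (neg_nonpos.2 (by positivity))) fun t ht => by
      have h1 := (abs_le.1 (hH t ht).2.2).1
      have h2 := (abs_le.1 (hB _ (hball t ht))).1
      have h3 : K * w t ^ 2 ≤ K * (M + P) ^ 2 := by
        have := hw0 t
        have := hwW t ht
        gcongr
      linarith
  have hv0 : Tendsto u' atTop (nhds 0) :=
    tendsto_zero_of_hasDerivAt_le_neg_norm_rpow (q := α + 2) hδ (by linarith) hu2
      (fun t ht => (hM t ht).2.2) (fun t ht => (hH t ht).1)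
      (fun t ht => (hH t ht).2.1.trans (neg_le_neg (by
        gcongr; exact le_add_of_nonneg_right (by positivity)))) hl
  have hp0 : Tendsto p atTop (nhds 0) :=
    tendsto_zero_of_hasDerivAt_le_neg_norm_rpow (q := α + 2) (L := L * M) hδ (by linarith) hpd
      (fun t ht => (hp'L t ht).trans (by gcongr; exact (hM t ht).2.1)) (fun t ht => (hH t ht).1)
      (fun t ht => (hH t ht).2.1.trans (neg_le_neg (by
        gcongr; exact le_add_of_nonneg_left (by positivity)))) hl
  have hwlim : Tendsto w atTop (nhds 0) := by simpa using hv0.norm.add hp0.norm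
  obtain ⟨a, -, φ, hφ, hφa⟩ := hcpt.tendsto_subseq (x := fun n : ℕ => u n)
    fun n => hball n n.cast_nonneg
  have hφ' : Tendsto (fun n => (φ n : ℝ)) atTop atTop :=
    tendsto_natCast_atTop_atTop.comp hφ.tendsto_atTop
  have ha0 : gradient Φ a = 0 :=
    tendsto_nhds_unique ((hgrad.continuous.tendsto a).comp hφa) (hp0.comp hφ')
  have hla : l = Φ a := by
    have h1 : Tendsto (fun t => H t - Φ (u t)) atTop (nhds 0) := by
      refine squeeze_zero_norm' ?_ (by simpa using (hwlim.pow 2).const_mul K)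
      filter_upwards [eventually_ge_atTop 0] with t ht using (hH t ht).2.2
    have h2 := (hl.comp hφ').sub (h1.comp hφ')
    refine tendsto_nhds_unique (by simpa using h2) ?_
    simpa [Function.comp_def] using (hΦ.continuous.tendsto a).comp hφa
  subst hla
  obtain ⟨σ, hσ, hLa⟩ := hLoj a ha0
  obtain ⟨hua, hO⟩ := tendsto_and_isBigO_of_lojasiewicz (u := u) (v := u') (w := w)
    (h := fun t => H t - Φ a) (h' := H') (a := a) (δ := δ / 2 ^ (α + 2))
    (K := 1 + K ^ (1 - θ) * (M + P) ^ (2 * (1 - θ) - 1)) hα0 hθ0 hθ1 hαθ (by positivity)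
    (by have := (hw0 0).trans (hwW 0 le_rfl); positivity) hσ hu1
    (fun t ht => (hH t ht).1.sub_const _) (fun t _ => le_add_of_nonneg_right (norm_nonneg _))
    (fun t ht => (hH t ht).2.1.trans (neg_le_neg (by
      rw [div_mul_eq_mul_div, div_le_iff₀ (by positivity), mul_assoc, mul_comm _ ((2 : ℝ) ^ _)]
      gcongr
      exact add_rpow_le_two_rpow_mul (norm_nonneg _) (norm_nonneg _) (by linarith))))
    (fun t ht => sub_nonneg.2 (hlH t ht)) (by simpa using hl.sub_const (Φ a))
    (fun t ht hb => by
      rw [← abs_of_nonneg (sub_nonneg.2 (hlH t ht))]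
      exact abs_rpow_le_of_abs_sub_le (by linarith) (by linarith) hK (hw0 t) (hwW t ht)
        (le_add_of_nonneg_left (norm_nonneg _)) (hLa _ hb) (by simpa using (hH t ht).2.2))
    ⟨_, hφ', hφa⟩
  exact ⟨a, ha0, by simpa using hv0.norm.add (hua.sub_const a).norm, hO⟩
end
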